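/- arXiv:0910.2055 — 6 statements merged into one kernel-verified Lean document; each statement's English description precedes it below -/
import Mathlib

section
/- There exist a 24-dimensional real inner product space V, a lattice Υ in V with √2·Υ even unimodular, and a polarization M, N of Υ with M, N even unimodular, such that μ(L(M,N,3)) = 4; and there exist such data with μ(L(M,N,3)) = 6. In particular, there exists a positive definite even unimodular lattice of rank 72 whose minimum norm is exactly 6. -/
noncomputable section

open scoped RealInnerProductSpace Pointwise
open Module

variable {V : Type*} [NormedAddCommGroup V] [InnerProductSpace ℝ V]

/-- `L` is a (full) lattice in `V`: a finitely generated `ℤ`-submodule spanning `V` over `ℝ`. -/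
def IsLat (L : Submodule ℤ V) : Prop :=
  L.FG ∧ Submodule.span ℝ (L : Set V) = ⊤

/-- The lattice `L` is integral: all inner products of lattice vectors are integers. -/
def IsIntegralLat (L : Submodule ℤ V) : Prop :=
  ∀ x ∈ L, ∀ y ∈ L, ∃ n : ℤ, ⟪x, y⟫ = (n : ℝ)

/-- The lattice `L` is even: it is integral and all norms are even integers. -/
def IsEvenLat (L : Submodule ℤ V) : Prop :=
  IsIntegralLat L ∧ ∀ x ∈ L, ∃ n : ℤ, ⟪x, x⟫ = 2 * (n : ℝ)

/-- The lattice `L` is unimodular: the Gram matrix of some `ℤ`-basis has determinant 1. -/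
def IsUnimodularLat (L : Submodule ℤ V) : Prop :=
  ∃ (n : ℕ) (b : Basis (Fin n) ℤ L),
    (Matrix.of fun i j : Fin n => ⟪(b i : V), (b j : V)⟫).det = 1

/-- The minimum norm `μ(L)` of a lattice. -/
def minNorm (L : Submodule ℤ V) : ℝ :=
  sInf {r : ℝ | ∃ x ∈ L, x ≠ 0 ∧ ⟪x, x⟫ = r}

/-- `√2·Υ` is an even unimodular lattice: all norms of `Υ` are integers, all doubled inner
products are integers, and the Gram matrix of the form `2⟪·,·⟫` on a `ℤ`-basis of `Υ` has
determinant 1. -/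
def SqrtTwoEvenUnimod (Υ : Submodule ℤ V) : Prop :=
  (∀ x ∈ Υ, ∃ n : ℤ, ⟪x, x⟫ = (n : ℝ)) ∧
  (∀ x ∈ Υ, ∀ y ∈ Υ, ∃ n : ℤ, 2 * ⟪x, y⟫ = (n : ℝ)) ∧
  ∃ (n : ℕ) (b : Basis (Fin n) ℤ Υ),
    (Matrix.of fun i j : Fin n => 2 * ⟪(b i : V), (b j : V)⟫).det = 1

/-- `M, N` is a polarization of `Υ`: a pair of integral sublattices with
`M + N = Υ` and `M ∩ N = 2Υ`. -/
def IsPolarization (Υ M N : Submodule ℤ V) : Prop :=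
  M ≤ Υ ∧ N ≤ Υ ∧ IsIntegralLat M ∧ IsIntegralLat N ∧ M ⊔ N = Υ ∧ M ⊓ N = (2 : ℤ) • Υ

/-- The sublattice `L_M = {(x_1,…,x_k) ∈ M^k : x_1+⋯+x_k ∈ M ∩ N}` of `V^k`. -/
def LsubM (M N : Submodule ℤ V) (k : ℕ) : Submodule ℤ (PiLp 2 fun _ : Fin k => V) where
  carrier := {v | (∀ i, v i ∈ M) ∧ (∑ i, v i) ∈ M ⊓ N}
  add_mem' := fun {a b} ha hb =>
    ⟨fun i => M.add_mem (ha.1 i) (hb.1 i), by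
      have h : (∑ i, (a + b) i) = (∑ i, a i) + ∑ i, b i :=
        (Finset.sum_congr rfl fun i _ => rfl).trans Finset.sum_add_distrib
      rw [h]; exact (M ⊓ N).add_mem ha.2 hb.2⟩
  zero_mem' := ⟨fun _ => M.zero_mem, by
      have h : (∑ i : Fin k, (0 : PiLp 2 fun _ : Fin k => V) i) = 0 :=
        Finset.sum_eq_zero fun _ _ => rfl
      rw [h]; exact (M ⊓ N).zero_mem⟩
  smul_mem' := fun c a ha =>
    ⟨fun i => M.smul_mem c (ha.1 i), by
      have h : (∑ i, (c • a) i) = c • ∑ i, a i := by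
        show (∑ i, c • a i) = c • ∑ i, a i
        exact Finset.smul_sum.symm
      rw [h]; exact (M ⊓ N).smul_mem c ha.2⟩

/-- The diagonal sublattice `L^N = {(y,…,y) : y ∈ N}` of `V^k`. -/
def LsupN (N : Submodule ℤ V) (k : ℕ) : Submodule ℤ (PiLp 2 fun _ : Fin k => V) where
  carrier := {v | ∃ y ∈ N, ∀ i, v i = y}
  add_mem' := fun {a b} ha hb => by
    obtain ⟨ya, hya, ha⟩ := ha
    obtain ⟨yb, hyb, hb⟩ := hb
    exact ⟨ya + yb, N.add_mem hya hyb, fun i => by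
      show a i + b i = ya + yb
      rw [ha i, hb i]⟩
  zero_mem' := ⟨0, N.zero_mem, fun _ => rfl⟩
  smul_mem' := fun c a ha => by
    obtain ⟨y, hy, h⟩ := ha
    exact ⟨c • y, N.smul_mem c hy, fun i => by
      show c • a i = c • y
      rw [h i]⟩

/-- The lattice `L(M,N,k) = L_M + L^N ⊆ V^k`. -/
def LMN (M N : Submodule ℤ V) (k : ℕ) : Submodule ℤ (PiLp 2 fun _ : Fin k => V) :=
  LsubM M N k ⊔ LsupN N k

/-- The Leech polarization setup: `V` is 24-dimensional, `√2·Υ` is even unimodular with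
minimum norm 4, and `M, N` is a polarization of `Υ` by two copies of the Leech lattice. -/
def LeechSetup (Υ M N : Submodule ℤ V) : Prop :=
  Module.finrank ℝ V = 24 ∧ IsLat Υ ∧ SqrtTwoEvenUnimod Υ ∧
  (∀ v ∈ Υ, v ≠ 0 → 4 ≤ 2 * ⟪v, v⟫) ∧
  IsPolarization Υ M N ∧
  IsLat M ∧ IsEvenLat M ∧ IsUnimodularLat M ∧ minNorm M = 4 ∧
  IsLat N ∧ IsEvenLat N ∧ IsUnimodularLat N ∧ minNorm N = 4

/-- `(w,x,y,z) ∈ N × M × M × M` is admissible if `x + y + z ∈ M ∩ N`. -/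
def Admissible (M N : Submodule ℤ V) (w x y z : V) : Prop :=
  w ∈ N ∧ x ∈ M ∧ y ∈ M ∧ z ∈ M ∧ x + y + z ∈ M ⊓ N

/-- An offender is an admissible quadruple all three of whose associated vectors
`w+x, w+y, w+z` have norm 2. -/
def Offender (M N : Submodule ℤ V) (w x y z : V) : Prop :=
  Admissible M N w x y z ∧
  ⟪w + x, w + x⟫ = 2 ∧ ⟪w + y, w + y⟫ = 2 ∧ ⟪w + z, w + z⟫ = 2

/-- A super offender is an offender with `⟪w,w⟫ = 4` whose multiset of norms
`{⟪x,x⟫, ⟪y,y⟫, ⟪z,z⟫}` equals `{6,6,4}`. -/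
def SuperOffender (M N : Submodule ℤ V) (w x y z : V) : Prop :=
  Offender M N w x y z ∧ ⟪w, w⟫ = 4 ∧
  ({⟪x, x⟫, ⟪y, y⟫, ⟪z, z⟫} : Multiset ℝ) = ({6, 6, 4} : Multiset ℝ)


/-! ### Self-dual lattices -/

/-- The integers inside the reals. -/
def ZZ : Subring ℝ := (Int.castRingHom ℝ).range

theorem mem_ZZ {r : ℝ} : r ∈ ZZ ↔ ∃ n : ℤ, r = (n : ℝ) := by
  constructor
  · rintro ⟨n, rfl⟩; exact ⟨n, by simp⟩
  · rintro ⟨n, rfl⟩; exact ⟨n, by simp⟩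

theorem gram_det_one (c : ℝ) (hc : 0 < c) (L : Submodule ℤ V) (hfg : L.FG)
    (hint : ∀ x ∈ L, ∀ y ∈ L, ∃ n : ℤ, c * ⟪x, y⟫ = (n : ℝ))
    (hdual : ∀ v : V, (∀ x ∈ L, ∃ n : ℤ, c * ⟪v, x⟫ = (n : ℝ)) → v ∈ L) :
    ∃ (n : ℕ) (b : Basis (Fin n) ℤ L),
      (Matrix.of fun i j : Fin n => c * ⟪(b i : V), (b j : V)⟫).det = 1 := by
  classical
  have : Module.Finite ℤ L := Module.Finite.iff_fg.mpr hfg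
  let _ : Module ℚ V := Module.compHom V (algebraMap ℚ ℝ)
  have : IsAddTorsionFree V := IsAddTorsionFree.of_module_rat V
  have : Module.Free ℤ L := inferInstance
  obtain ⟨n, ⟨b⟩⟩ : ∃ n, Nonempty (Basis (Fin n) ℤ L) := ⟨_, ⟨Module.finBasis ℤ L⟩⟩
  refine ⟨n, b, ?_⟩
  set G : Matrix (Fin n) (Fin n) ℝ :=
    Matrix.of fun i j : Fin n => c * ⟪(b i : V), (b j : V)⟫ with hG
  choose g hg using fun i j : Fin n => hint (b i) (b i).2 (b j) (b j).2
  let G0 : Matrix (Fin n) (Fin n) ℤ := Matrix.of g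
  have hGG : G = G0.map (Int.castRingHom ℝ) := by
    ext i j; simp [G, G0, hg]
  have hdetGG : G.det = ((G0.det : ℤ) : ℝ) := by
    rw [hGG]; exact (RingHom.map_det (Int.castRingHom ℝ) G0).symm
  -- expansions in the basis
  have hrep : ∀ x : V, x ∈ L → ∃ k : Fin n → ℤ, x = ∑ i, (k i : ℝ) • (b i : V) := by
    intro x hx
    refine ⟨fun i => b.repr ⟨x, hx⟩ i, ?_⟩
    have h := congrArg (Subtype.val) (b.sum_repr ⟨x, hx⟩)
    refine h.symm.trans ?_
    rw [Submodule.coe_sum]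
    simp [Int.cast_smul_eq_zsmul]
  have hdet : G0.det ≠ 0 := by
    intro h0
    obtain ⟨k, hk, hk0⟩ := Matrix.exists_mulVec_eq_zero_iff.mpr h0
    let v : V := ∑ i, (k i : ℝ) • (b i : V)
    have hvb : ∀ j, c * ⟪(b j : V), v⟫ = 0 := by
      intro j
      have h1 := congrFun hk0 j
      simp only [Matrix.mulVec, dotProduct, Pi.zero_apply, G0, Matrix.of_apply] at h1
      simp only [v, inner_sum, inner_smul_right, Finset.mul_sum]
      have h2 : ((∑ i, g j i * k i : ℤ) : ℝ) = 0 := by rw [h1]; simp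
      push_cast at h2
      rw [← h2]
      refine Finset.sum_congr rfl fun i _ => ?_
      rw [← hg]; ring
    have hvv : ⟪v, v⟫ = 0 := by
      have : ⟪v, v⟫ = ∑ i, (k i : ℝ) * ⟪(b i : V), v⟫ := by
        conv_lhs => rw [show v = ∑ i, (k i : ℝ) • (b i : V) from rfl]
        rw [sum_inner]
        simp only [inner_smul_left]
        rfl
      rw [this]
      refine Finset.sum_eq_zero fun i _ => ?_
      have := hvb i
      rcases mul_eq_zero.mp this with h | h
      · exact absurd h hc.ne'
      · rw [h, mul_zero]
    have hv : v = 0 := inner_self_eq_zero.mp hvv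
    have hv' : ∑ i, k i • b i = 0 := by
      apply Subtype.ext
      have : ((∑ i, k i • b i : L) : V) = v := by
        simp [v, Int.cast_smul_eq_zsmul]
      rw [this, hv]; rfl
    have := Fintype.linearIndependent_iff.mp b.linearIndependent k hv'
    exact hk (funext this)
  have hdetG : IsUnit G.det := by
    rw [hdetGG]; exact isUnit_iff_ne_zero.mpr (by exact_mod_cast hdet)
  let d : Fin n → V := fun i => ∑ j, G⁻¹ i j • (b j : V)
  have hd : ∀ i j, c * ⟪d i, (b j : V)⟫ = (1 : Matrix (Fin n) (Fin n) ℝ) i j := by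
    intro i j
    rw [← Matrix.nonsing_inv_mul G hdetG]
    simp only [d, sum_inner, inner_smul_left, Finset.mul_sum, Matrix.mul_apply, G,
      Matrix.of_apply]
    refine Finset.sum_congr rfl fun l _ => ?_
    simp; ring
  have hdL : ∀ i, d i ∈ L := by
    intro i
    apply hdual
    intro x hx
    obtain ⟨k, rfl⟩ := hrep x hx
    refine mem_ZZ.mp ?_
    simp only [inner_sum, inner_smul_right, Finset.mul_sum]
    refine sum_mem fun j _ => ?_
    rw [mul_left_comm, hd]
    refine mul_mem (mem_ZZ.mpr ⟨_, rfl⟩) ?_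
    by_cases h : i = j
    · subst h; simp
    · simp [h]
  choose K hK using fun i => hrep (d i) (hdL i)
  have hKG : (Matrix.of K) * G0 = 1 := by
    ext i j
    have h1 := hd i j
    rw [hK i] at h1
    simp only [sum_inner, inner_smul_left, Finset.mul_sum] at h1
    have h2 : (((Matrix.of K * G0) i j : ℤ) : ℝ) = (((1 : Matrix (Fin n) (Fin n) ℤ) i j : ℤ) : ℝ) := by
      have e : (((1 : Matrix (Fin n) (Fin n) ℤ) i j : ℤ) : ℝ) = (1 : Matrix (Fin n) (Fin n) ℝ) i j := by
        by_cases h : i = j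
        · subst h; simp
        · simp [h]
      rw [e, ← h1, Matrix.mul_apply]
      push_cast
      refine Finset.sum_congr rfl fun l _ => ?_
      simp only [Matrix.of_apply, G0, ← hg]
      simp; ring
    exact_mod_cast h2
  have hu : IsUnit G0.det := by
    have := congrArg Matrix.det hKG
    rw [Matrix.det_mul, Matrix.det_one] at this
    exact IsUnit.of_mul_eq_one _ ((mul_comm _ _).trans this)
  have hpos : 0 ≤ G.det := by
    have h1 : G = c • Matrix.gram ℝ (fun i => (b i : V)) := by
      ext i j; simp [G, Matrix.gram]
    rw [h1]
    exact ((Matrix.posSemidef_gram ℝ (fun i => (b i : V))).smul hc.le).det_nonneg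
  rcases Int.isUnit_iff.mp hu with h | h
  · rw [hdetGG, h]; simp
  · rw [hdetGG, h] at hpos; norm_num at hpos

/-- `√2·Υ` is an even self-dual lattice. -/
structure Good (Υ : Submodule ℤ V) : Prop where
  lat : IsLat Υ
  norm : ∀ x ∈ Υ, ∃ n : ℤ, ⟪x, x⟫ = (n : ℝ)
  int2 : ∀ x ∈ Υ, ∀ y ∈ Υ, ∃ n : ℤ, 2 * ⟪x, y⟫ = (n : ℝ)
  dual : ∀ v : V, (∀ x ∈ Υ, ∃ n : ℤ, 2 * ⟪v, x⟫ = (n : ℝ)) → v ∈ Υ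

/-- `M` is an even self-dual lattice. -/
structure SD (M : Submodule ℤ V) : Prop where
  lat : IsLat M
  even : IsEvenLat M
  dual : ∀ v : V, (∀ x ∈ M, ∃ n : ℤ, ⟪v, x⟫ = (n : ℝ)) → v ∈ M

theorem Good.sqrtTwo {Υ : Submodule ℤ V} (h : Good Υ) : SqrtTwoEvenUnimod Υ :=
  ⟨h.norm, h.int2, gram_det_one 2 two_pos Υ h.lat.1 h.int2 h.dual⟩

theorem SD.unimodular {M : Submodule ℤ V} (h : SD M) : IsUnimodularLat M := by
  have := gram_det_one 1 one_pos M h.lat.1 (by simpa using (show ∀ x ∈ M, ∀ y ∈ M, ∃ n : ℤ, ⟪x, y⟫ = (n : ℝ) from h.even.1)) (by simpa using h.dual)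
  simpa [IsUnimodularLat] using this

theorem fg_of_le {L K : Submodule ℤ V} (hLK : L ≤ K) (hK : K.FG) : L.FG := by
  have : Module.Finite ℤ K := Module.Finite.iff_fg.mpr hK
  have : IsNoetherian ℤ K := inferInstance
  exact Submodule.FG.of_le_of_isNoetherian hLK

theorem mem_two_smul {Υ : Submodule ℤ V} {x : V} :
    x ∈ (2 : ℤ) • Υ ↔ ∃ u ∈ Υ, x = (2 : ℝ) • u := by
  rw [Submodule.mem_smul_pointwise_iff_exists]
  constructor
  · rintro ⟨u, hu, rfl⟩
    exact ⟨u, hu, by simp [two_smul]⟩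
  · rintro ⟨u, hu, rfl⟩
    exact ⟨u, hu, by simp [two_smul]⟩

/-- A full sublattice containing `2Υ` is a lattice. -/
theorem isLat_of_two {Υ M : Submodule ℤ V} (hΥ : IsLat Υ) (hM : M ≤ Υ)
    (h2 : ∀ u ∈ Υ, (2 : ℝ) • u ∈ M) : IsLat M := by
  refine ⟨fg_of_le hM hΥ.1, ?_⟩
  rw [eq_top_iff, ← hΥ.2, Submodule.span_le]
  intro u hu
  have h1 : (2 : ℝ) • u ∈ Submodule.span ℝ (M : Set V) := Submodule.subset_span (h2 u hu)
  have h3 := Submodule.smul_mem _ (2⁻¹ : ℝ) h1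
  rwa [smul_smul, inv_mul_cancel₀ two_ne_zero, one_smul] at h3

/-! ### Polarizations from a similarity -/

/-- `a` generates an action of `ℤ[(1+√-7)/2]` with adjoint given by conjugation. -/
structure Alpha (a : V →ₗ[ℝ] V) : Prop where
  adj : ∀ x y, ⟪a x, y⟫ = ⟪x, y - a y⟫
  sq : ∀ x, a (a x) = a x - (2 : ℝ) • x

theorem Alpha.inner {a : V →ₗ[ℝ] V} (ha : Alpha a) (x y : V) :
    ⟪a x, a y⟫ = 2 * ⟪x, y⟫ := by
  rw [ha.adj, ha.sq, sub_sub_cancel, inner_smul_right]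

theorem Alpha.bar {a : V →ₗ[ℝ] V} (ha : Alpha a) : Alpha (LinearMap.id - a) := by
  constructor
  · intro x y
    simp only [LinearMap.sub_apply, LinearMap.id_apply, sub_sub_cancel]
    rw [inner_sub_left, ha.adj, inner_sub_right]; ring
  · intro x
    simp only [LinearMap.sub_apply, LinearMap.id_apply, map_sub, ha.sq]
    module

/-- The image of a lattice under a real-linear map. -/
def img {W : Type*} [NormedAddCommGroup W] [InnerProductSpace ℝ W]
    (a : V →ₗ[ℝ] W) (L : Submodule ℤ V) : Submodule ℤ W :=
  L.map (a.restrictScalars ℤ)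

theorem mem_img {W : Type*} [NormedAddCommGroup W] [InnerProductSpace ℝ W]
    {a : V →ₗ[ℝ] W} {L : Submodule ℤ V} {y : W} : y ∈ img a L ↔ ∃ x ∈ L, a x = y :=
  Iff.rfl

theorem smul2_mem {L : Submodule ℤ V} {x : V} (hx : x ∈ L) : (2 : ℝ) • x ∈ L := by
  rw [two_smul]; exact add_mem hx hx

theorem Alpha.sd {a : V →ₗ[ℝ] V} (ha : Alpha a) {Υ : Submodule ℤ V} (h : Good Υ)
    (hs : ∀ x ∈ Υ, a x ∈ Υ) : SD (img a Υ) := by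
  refine ⟨isLat_of_two h.lat ?_ ?_, ⟨?_, ?_⟩, ?_⟩
  · rintro _ ⟨x, hx, rfl⟩; exact hs x hx
  · intro u hu
    refine mem_img.mpr ⟨u - a u, sub_mem hu (hs u hu), ?_⟩
    rw [map_sub, ha.sq, sub_sub_cancel]
  · rintro _ ⟨x, hx, rfl⟩ _ ⟨y, hy, rfl⟩
    obtain ⟨n, hn⟩ := h.int2 x hx y hy
    exact ⟨n, (ha.inner x y).trans hn⟩
  · rintro _ ⟨x, hx, rfl⟩
    obtain ⟨n, hn⟩ := h.norm x hx
    exact ⟨n, (ha.inner x x).trans (by rw [hn])⟩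
  · intro v hv
    refine mem_img.mpr ⟨(2⁻¹ : ℝ) • (v - a v), ?_, ?_⟩
    · apply h.dual
      intro x hx
      obtain ⟨n, hn⟩ := hv (a x) (mem_img.mpr ⟨x, hx, rfl⟩)
      refine ⟨n, ?_⟩
      rw [real_inner_comm, ha.adj, real_inner_comm] at hn
      rw [inner_smul_left, ← hn]
      simp
    · rw [map_smul, map_sub, ha.sq, sub_sub_cancel, smul_smul, inv_mul_cancel₀ two_ne_zero,
        one_smul]

theorem Alpha.pol {a : V →ₗ[ℝ] V} (ha : Alpha a) {Υ : Submodule ℤ V} (h : Good Υ)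
    (hs : ∀ x ∈ Υ, a x ∈ Υ) : IsPolarization Υ (img a Υ) (img (LinearMap.id - a) Υ) := by
  have hs' : ∀ x ∈ Υ, (LinearMap.id - a : V →ₗ[ℝ] V) x ∈ Υ := fun x hx => sub_mem hx (hs x hx)
  have h1 : img a Υ ≤ Υ := by rintro _ ⟨x, hx, rfl⟩; exact hs x hx
  have h2 : img (LinearMap.id - a) Υ ≤ Υ := by rintro _ ⟨x, hx, rfl⟩; exact hs' x hx
  refine ⟨h1, h2, (ha.sd h hs).even.1, (ha.bar.sd h hs').even.1, ?_, ?_⟩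
  · refine le_antisymm (sup_le h1 h2) ?_
    intro x hx
    refine Submodule.mem_sup.mpr ⟨a x, mem_img.mpr ⟨x, hx, rfl⟩, (LinearMap.id - a : V →ₗ[ℝ] V) x,
      mem_img.mpr ⟨x, hx, rfl⟩, ?_⟩
    simp
  · ext x
    rw [mem_two_smul]
    constructor
    · rintro ⟨⟨y, hy, rfl⟩, ⟨z, hz, hyz⟩⟩
      have hyz : z - a z = a y := hyz
      refine ⟨z + y, add_mem hz hy, ?_⟩
      change a y = _
      have h3 := congrArg a hyz
      rw [map_sub, ha.sq, ha.sq, sub_sub_cancel] at h3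
      rw [smul_add, h3, sub_add_cancel]
    · rintro ⟨u, hu, rfl⟩
      refine ⟨mem_img.mpr ⟨u - a u, hs' u hu, ?_⟩, mem_img.mpr ⟨a u, hs u hu, ?_⟩⟩
      · rw [map_sub, ha.sq, sub_sub_cancel]
      · simp [ha.sq]

/-! ### Changing one member of a polarization -/

theorem IsPolarization.two_left {Υ M N : Submodule ℤ V} (hp : IsPolarization Υ M N) {u : V}
    (hu : u ∈ Υ) : (2 : ℝ) • u ∈ M := by
  have : (2 : ℝ) • u ∈ M ⊓ N := by
    rw [hp.2.2.2.2.2]; exact mem_two_smul.mpr ⟨u, hu, rfl⟩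
  exact this.1

theorem IsPolarization.two_right {Υ M N : Submodule ℤ V} (hp : IsPolarization Υ M N) {u : V}
    (hu : u ∈ Υ) : (2 : ℝ) • u ∈ N := by
  have : (2 : ℝ) • u ∈ M ⊓ N := by
    rw [hp.2.2.2.2.2]; exact mem_two_smul.mpr ⟨u, hu, rfl⟩
  exact this.2

theorem IsPolarization.symm {Υ M N : Submodule ℤ V} (hp : IsPolarization Υ M N) :
    IsPolarization Υ N M := by
  obtain ⟨h1, h2, h3, h4, h5, h6⟩ := hp
  exact ⟨h2, h1, h4, h3, by rw [sup_comm]; exact h5, by rw [inf_comm]; exact h6⟩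

theorem sd_of_pol {Υ M N : Submodule ℤ V} (h : Good Υ) (hp : IsPolarization Υ M N)
    (hN : IsEvenLat N) : SD N := by
  refine ⟨isLat_of_two h.lat hp.2.1 (fun u hu => hp.two_right hu), hN, ?_⟩
  intro v hv
  have hvΥ : v ∈ Υ := by
    apply h.dual
    intro x hx
    obtain ⟨n, hn⟩ := hv _ (hp.two_right hx)
    exact ⟨n, by rw [← hn, inner_smul_right]⟩
  have hvs := hvΥ
  rw [← hp.2.2.2.2.1] at hvs
  obtain ⟨k, hk, n, hn, rfl⟩ := Submodule.mem_sup.mp hvs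
  have hk2 : (2⁻¹ : ℝ) • k ∈ Υ := by
    apply h.dual
    intro x hx
    rw [← hp.2.2.2.2.1] at hx
    obtain ⟨k', hk', n', hn', rfl⟩ := Submodule.mem_sup.mp hx
    obtain ⟨i, hi⟩ := hp.2.2.1 k hk k' hk'
    obtain ⟨j, hj⟩ := hv n' hn'
    obtain ⟨l, hl⟩ := hN.1 n hn n' hn'
    refine ⟨i + (j - l), ?_⟩
    rw [inner_add_left] at hj
    rw [real_inner_smul_left, inner_add_right]
    push_cast
    linarith
  have := hp.two_right hk2
  rw [smul_smul, mul_inv_cancel₀ two_ne_zero, one_smul] at this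
  exact add_mem this hn

theorem real_zsmul_mem {L : Submodule ℤ V} {x : V} (hx : x ∈ L) {r : ℝ} {n : ℤ}
    (hr : r = (n : ℝ)) : r • x ∈ L := by
  rw [hr, Int.cast_smul_eq_zsmul]; exact L.smul_mem n hx

/-- The (lifted) Eichler transformation. -/
def eichler (u m : V) : V →ₗ[ℝ] V :=
  LinearMap.id + (2 : ℝ) • ((innerₗ V u).smulRight m) - (2 : ℝ) • ((innerₗ V m).smulRight u)

theorem eichler_apply (u m x : V) :
    eichler u m x = x + (2 * ⟪u, x⟫) • m - (2 * ⟪m, x⟫) • u := by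
  simp [eichler, smul_smul]

def eichN (Υ N : Submodule ℤ V) (u m : V) : Submodule ℤ V :=
  Υ ⊓ N.comap ((eichler u m).restrictScalars ℤ)

theorem mem_eichN {Υ N : Submodule ℤ V} {u m x : V} :
    x ∈ eichN Υ N u m ↔ x ∈ Υ ∧ eichler u m x ∈ N := Iff.rfl

theorem eichler_inner (u m x y : V) :
    ⟪eichler u m x, eichler u m y⟫ = ⟪x, y⟫ +
      ⟪(2 * ⟪u, x⟫) • m - (2 * ⟪m, x⟫) • u, (2 * ⟪u, y⟫) • m - (2 * ⟪m, y⟫) • u⟫ := by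
  rw [eichler_apply, eichler_apply]
  simp only [inner_add_left, inner_add_right, inner_sub_left, inner_sub_right,
    real_inner_smul_left, real_inner_smul_right]
  rw [real_inner_comm x m, real_inner_comm x u]
  ring

theorem eich_pol {Υ M N : Submodule ℤ V} (h : Good Υ) (hp : IsPolarization Υ M N)
    (hM : IsEvenLat M) (hN : IsEvenLat N) {u m : V} (hu : u ∈ M) (hm : m ∈ M) :
    IsPolarization Υ M (eichN Υ N u m) ∧ IsEvenLat (eichN Υ N u m) := by
  have hd : ∀ x ∈ Υ, (2 * ⟪u, x⟫) • m - (2 * ⟪m, x⟫) • u ∈ M := by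
    intro x hx
    obtain ⟨i, hi⟩ := h.int2 u (hp.1 hu) x hx
    obtain ⟨j, hj⟩ := h.int2 m (hp.1 hm) x hx
    exact sub_mem (real_zsmul_mem hm hi) (real_zsmul_mem hu hj)
  have hd2 : ∀ x ∈ M, (2 * ⟪u, x⟫) • m - (2 * ⟪m, x⟫) • u ∈ N := by
    intro x hx
    obtain ⟨i, hi⟩ := hM.1 u hu x hx
    obtain ⟨j, hj⟩ := hM.1 m hm x hx
    rw [mul_smul, mul_smul]
    exact sub_mem (hp.two_right (hp.1 (real_zsmul_mem hm hi)))
      (hp.two_right (hp.1 (real_zsmul_mem hu hj)))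
  have hE : IsEvenLat (eichN Υ N u m) := by
    constructor
    · rintro x ⟨hx, hTx⟩ y ⟨hy, hTy⟩
      obtain ⟨i, hi⟩ := hN.1 _ hTx _ hTy
      obtain ⟨j, hj⟩ := hM.1 _ (hd x hx) _ (hd y hy)
      have := eichler_inner u m x y
      refine ⟨i - j, ?_⟩
      push_cast
      rw [← hi, ← hj]
      change _ = ⟪eichler u m x, eichler u m y⟫ - _
      linarith
    · rintro x ⟨hx, hTx⟩
      obtain ⟨i, hi⟩ := hN.2 _ hTx
      obtain ⟨j, hj⟩ := hM.2 _ (hd x hx)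
      have := eichler_inner u m x x
      refine ⟨i - j, ?_⟩
      push_cast
      rw [mul_sub, ← hi, ← hj]
      change _ = ⟪eichler u m x, eichler u m x⟫ - _
      linarith
  refine ⟨⟨hp.1, inf_le_left, hM.1, hE.1, ?_, ?_⟩, hE⟩
  · refine le_antisymm (sup_le hp.1 inf_le_left) ?_
    intro x hx
    have hTx : eichler u m x ∈ Υ := by
      rw [eichler_apply, add_sub_assoc]; exact add_mem hx (hp.1 (hd x hx))
    rw [← hp.2.2.2.2.1] at hTx
    obtain ⟨k, hk, n, hn, hkn⟩ := Submodule.mem_sup.mp hTx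
    refine Submodule.mem_sup.mpr ⟨k, hk, x - k, mem_eichN.mpr ⟨sub_mem hx (hp.1 hk), ?_⟩, ?_⟩
    · have e : eichler u m (x - k) = n - ((2 * ⟪u, k⟫) • m - (2 * ⟪m, k⟫) • u) := by
        rw [map_sub, ← hkn, eichler_apply u m k]; abel
      rw [e]
      exact sub_mem hn (hd2 k hk)
    · abel
  · ext x
    constructor
    · rintro ⟨hxM, hxΥ, hTx⟩
      have hTx : eichler u m x ∈ N := hTx
      rw [← hp.2.2.2.2.2]
      refine ⟨hxM, ?_⟩
      rw [eichler_apply, add_sub_assoc] at hTx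
      have := sub_mem hTx (hd2 x hxM)
      rwa [add_sub_cancel_right] at this
    · intro hx
      obtain ⟨y, hy, rfl⟩ := mem_two_smul.mp hx
      refine ⟨hp.two_left hy, hp.1 (hp.two_left hy), ?_⟩
      change eichler u m _ ∈ N
      rw [map_smul]
      refine hp.two_right ?_
      rw [eichler_apply, add_sub_assoc]; exact add_mem hy (hp.1 (hd y hy))

theorem exists_pol_root {Υ M N : Submodule ℤ V} (h : Good Υ) (hp : IsPolarization Υ M N)
    (hM : SD M) (hN : IsEvenLat N) {v : V} (hv : v ∈ Υ) (hv2 : ⟪v, v⟫ = 2) (hvM : v ∉ M) :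
    ∃ N' : Submodule ℤ V, IsPolarization Υ M N' ∧ SD N' ∧ v ∈ N' := by
  have hvs := hv
  rw [← hp.2.2.2.2.1] at hvs
  obtain ⟨k, hk, n, hn, rfl⟩ := Submodule.mem_sup.mp hvs
  have hnM : n ∉ M := fun hh => hvM (add_mem hk hh)
  have : ∃ u ∈ M, ¬ ∃ i : ℤ, ⟪n, u⟫ = (i : ℝ) := by
    by_contra hcon
    push Not at hcon
    exact hnM (hM.dual n (fun x hx => hcon x hx))
  obtain ⟨u, hu, hun⟩ := this
  obtain ⟨hp', hE⟩ := eich_pol h hp hM.even hN hu hk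
  refine ⟨_, hp', sd_of_pol h hp' hE, mem_eichN.mpr ⟨hv, ?_⟩⟩
  obtain ⟨i, hi⟩ := h.int2 n (hp.2.1 hn) u (hp.1 hu)
  obtain ⟨i', hi'⟩ := hM.even.1 u hu k hk
  obtain ⟨q, hq⟩ := hM.even.2 k hk
  obtain ⟨q', hq'⟩ := hN.2 n hn
  have hodd : Odd i := by
    rw [← Int.not_even_iff_odd]
    rintro ⟨j, hj⟩
    refine hun ⟨j, ?_⟩
    rw [hj] at hi; push_cast at hi; linarith
  obtain ⟨j, hj⟩ := hodd
  have e1 : 2 * ⟪u, k + n⟫ = ((2 * (i' + j) + 1 : ℤ) : ℝ) := by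
    rw [inner_add_right, hi', real_inner_comm, mul_add, hi, hj]; push_cast; ring
  have e2 : 2 * ⟪k, k + n⟫ = 2 * ((1 + q - q' : ℤ) : ℝ) := by
    rw [inner_add_left, inner_add_right, inner_add_right, real_inner_comm k n] at hv2
    rw [inner_add_right]
    push_cast
    linarith
  have e : eichler u k (k + n) = n + ((2 : ℝ) • (((i' + j + 1 : ℤ) : ℝ) • k)
      - (2 : ℝ) • (((1 + q - q' : ℤ) : ℝ) • u)) := by
    rw [eichler_apply, e1, e2]
    push_cast
    module
  rw [e]
  exact add_mem hn (sub_mem (hp.two_right (hp.1 (real_zsmul_mem hk rfl)))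
    (hp.two_right (hp.1 (real_zsmul_mem hu rfl))))

/-! ### The lattice `L(M,N,3)` -/

theorem mem_LMN {M N : Submodule ℤ V} {v : PiLp 2 fun _ : Fin 3 => V} :
    v ∈ LMN M N 3 ↔ ∃ w ∈ N, (∀ i, v i - w ∈ M) ∧
      (v 0 - w) + (v 1 - w) + (v 2 - w) ∈ M ⊓ N := by
  constructor
  · intro hv
    obtain ⟨x, hx, y, ⟨w, hw, hy⟩, rfl⟩ := Submodule.mem_sup.mp hv
    have e : ∀ i, (x + y) i - w = x i := by
      intro i
      change x i + y i - w = x i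
      rw [hy i, add_sub_cancel_right]
    refine ⟨w, hw, fun i => ?_, ?_⟩
    · rw [e]; exact hx.1 i
    · rw [e, e, e, ← Fin.sum_univ_three]; exact hx.2
  · rintro ⟨w, hw, h1, h2⟩
    refine Submodule.mem_sup.mpr ⟨WithLp.toLp 2 (fun i => v i - w), ⟨h1, ?_⟩,
      WithLp.toLp 2 (fun _ => w), ⟨w, hw, fun _ => rfl⟩, ?_⟩
    · rw [Fin.sum_univ_three]; exact h2
    · ext i
      change v i - w + w = v i
      abel

theorem inner3 (v w : PiLp 2 fun _ : Fin 3 => V) :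
    ⟪v, w⟫ = ⟪v 0, w 0⟫ + ⟪v 1, w 1⟫ + ⟪v 2, w 2⟫ := by
  rw [PiLp.inner_apply, Fin.sum_univ_three]

/-- The vector with given components. -/
def tri (x y z : V) : PiLp 2 fun _ : Fin 3 => V := WithLp.toLp 2 ![x, y, z]

theorem tri0 (x y z : V) : (tri x y z) 0 = x := rfl
theorem tri1 (x y z : V) : (tri x y z) 1 = y := rfl
theorem tri2 (x y z : V) : (tri x y z) 2 = z := rfl

/-- The inclusion of a factor. -/
def inc (i : Fin 3) : V →ₗ[ℝ] (PiLp 2 fun _ : Fin 3 => V) :=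
  (WithLp.linearEquiv 2 ℝ (Fin 3 → V)).symm.toLinearMap ∘ₗ LinearMap.single ℝ (fun _ => V) i

theorem inc_apply (i j : Fin 3) (x : V) : (inc i x) j = if j = i then x else 0 := by
  change (Pi.single i x : Fin 3 → V) j = _
  rw [Pi.single_apply]

theorem sum_inc (v : PiLp 2 fun _ : Fin 3 => V) : inc 0 (v 0) + inc 1 (v 1) + inc 2 (v 2) = v := by
  ext j
  change inc 0 (v 0) j + inc 1 (v 1) j + inc 2 (v 2) j = v j
  rw [inc_apply, inc_apply, inc_apply]
  fin_cases j <;> simp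

theorem cube_isLat {Υ : Submodule ℤ V} (h : IsLat Υ) :
    IsLat (img (inc 0) Υ ⊔ img (inc 1) Υ ⊔ img (inc 2) Υ) := by
  refine ⟨((h.1.map _).sup (h.1.map _)).sup (h.1.map _), ?_⟩
  rw [eq_top_iff]
  intro v _
  have key : ∀ (i : Fin 3), img (inc i) Υ ≤ img (inc 0) Υ ⊔ img (inc 1) Υ ⊔ img (inc 2) Υ := by
    intro i
    fin_cases i
    · exact le_sup_left.trans le_sup_left
    · exact le_sup_right.trans le_sup_left
    · exact le_sup_right
  have key2 : ∀ (i : Fin 3) (x : V), inc i x ∈ Submodule.span ℝ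
      ((img (inc 0) Υ ⊔ img (inc 1) Υ ⊔ img (inc 2) Υ : Submodule ℤ _) :
        Set (PiLp 2 fun _ : Fin 3 => V)) := by
    intro i x
    have hx : x ∈ Submodule.span ℝ (Υ : Set V) := by rw [h.2]; trivial
    have h1 := Submodule.mem_map_of_mem (f := inc i) hx
    rw [Submodule.map_span] at h1
    exact Submodule.span_mono (key i) h1
  rw [← sum_inc v]
  exact add_mem (add_mem (key2 _ _) (key2 _ _)) (key2 _ _)

theorem LMN_comp_mem {Υ M N : Submodule ℤ V} (hp : IsPolarization Υ M N)
    {v : PiLp 2 fun _ : Fin 3 => V} (hv : v ∈ LMN M N 3) (i : Fin 3) : v i ∈ Υ := by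
  obtain ⟨w, hw, h1, -⟩ := mem_LMN.mp hv
  have := add_mem (hp.1 (h1 i)) (hp.2.1 hw)
  rwa [sub_add_cancel] at this

theorem LMN_sum_mem {Υ M N : Submodule ℤ V} (hp : IsPolarization Υ M N)
    {v : PiLp 2 fun _ : Fin 3 => V} (hv : v ∈ LMN M N 3) : v 0 + v 1 + v 2 ∈ N := by
  obtain ⟨w, hw, h1, h2⟩ := mem_LMN.mp hv
  have e : v 0 + v 1 + v 2 = ((v 0 - w) + (v 1 - w) + (v 2 - w)) + (w + w + w) := by abel
  rw [e]
  exact add_mem h2.2 (add_mem (add_mem hw hw) hw)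

theorem mem_LMN_of {Υ M N : Submodule ℤ V} (hp : IsPolarization Υ M N)
    {v : PiLp 2 fun _ : Fin 3 => V} (h0 : v 0 ∈ Υ) (h1 : v 1 - v 0 ∈ M) (h2 : v 2 - v 0 ∈ M)
    (hs : v 0 + v 1 + v 2 ∈ N) : v ∈ LMN M N 3 := by
  rw [← hp.2.2.2.2.1] at h0
  obtain ⟨k, hk, w, hw, hkw⟩ := Submodule.mem_sup.mp h0
  have g0 : v 0 - w ∈ M := by rw [← hkw, add_sub_cancel_right]; exact hk
  have g1 : v 1 - w ∈ M := by
    have := add_mem h1 g0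
    rwa [sub_add_sub_cancel] at this
  have g2 : v 2 - w ∈ M := by
    have := add_mem h2 g0
    rwa [sub_add_sub_cancel] at this
  refine mem_LMN.mpr ⟨w, hw, fun i => ?_, add_mem (add_mem g0 g1) g2, ?_⟩
  · fin_cases i
    · exact g0
    · exact g1
    · exact g2
  · have e : (v 0 - w) + (v 1 - w) + (v 2 - w) = v 0 + v 1 + v 2 - (w + w + w) := by abel
    rw [e]
    exact sub_mem hs (add_mem (add_mem hw hw) hw)

theorem LMN_even {Υ M N : Submodule ℤ V} (hp : IsPolarization Υ M N) (hM : IsEvenLat M)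
    (hN : IsEvenLat N) : IsEvenLat (LMN M N 3) := by
  have expand : ∀ (v v' : PiLp 2 fun _ : Fin 3 => V) (w w' : V), ⟪v, v'⟫ =
      3 * ⟪w, w'⟫ + ⟪w, (v' 0 - w') + (v' 1 - w') + (v' 2 - w')⟫
        + ⟪w', (v 0 - w) + (v 1 - w) + (v 2 - w)⟫
        + (⟪v 0 - w, v' 0 - w'⟫ + ⟪v 1 - w, v' 1 - w'⟫ + ⟪v 2 - w, v' 2 - w'⟫) := by
    intro v v' w w'
    rw [inner3]
    simp only [inner_add_right, inner_sub_right, inner_sub_left]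
    rw [real_inner_comm (v 0) w', real_inner_comm (v 1) w', real_inner_comm (v 2) w',
      real_inner_comm w w']
    ring
  constructor
  · intro v hv v' hv'
    obtain ⟨w, hw, h1, h2⟩ := mem_LMN.mp hv
    obtain ⟨w', hw', h1', h2'⟩ := mem_LMN.mp hv'
    obtain ⟨n1, e1⟩ := hN.1 w hw w' hw'
    obtain ⟨n2, e2⟩ := hN.1 w hw _ h2'.2
    obtain ⟨n3, e3⟩ := hN.1 w' hw' _ h2.2
    obtain ⟨n4, e4⟩ := hM.1 _ (h1 0) _ (h1' 0)
    obtain ⟨n5, e5⟩ := hM.1 _ (h1 1) _ (h1' 1)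
    obtain ⟨n6, e6⟩ := hM.1 _ (h1 2) _ (h1' 2)
    refine ⟨3 * n1 + n2 + n3 + (n4 + n5 + n6), ?_⟩
    rw [expand v v' w w', e1, e2, e3, e4, e5, e6]
    push_cast; ring
  · intro v hv
    obtain ⟨w, hw, h1, h2⟩ := mem_LMN.mp hv
    obtain ⟨n1, e1⟩ := hN.2 w hw
    obtain ⟨n2, e2⟩ := hN.1 w hw _ h2.2
    obtain ⟨n4, e4⟩ := hM.2 _ (h1 0)
    obtain ⟨n5, e5⟩ := hM.2 _ (h1 1)
    obtain ⟨n6, e6⟩ := hM.2 _ (h1 2)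
    refine ⟨3 * n1 + n2 + (n4 + n5 + n6), ?_⟩
    rw [expand v v w w, e1, e2, e4, e5, e6]
    push_cast; ring

theorem LMN_sd {Υ M N : Submodule ℤ V} (h : Good Υ) (hp : IsPolarization Υ M N) (hM : SD M)
    (hN : SD N) : SD (LMN M N 3) := by
  have hpair : ∀ x ∈ M, ∀ i j : Fin 3, i ≠ j → inc i x - inc j x ∈ LMN M N 3 := by
    intro x hx i j hij
    have e : ∀ l, (inc i x - inc j x) l = (if l = i then x else 0) - (if l = j then x else 0) := by
      intro l
      change inc i x l - inc j x l = _
      rw [inc_apply, inc_apply]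
    have hmem : ∀ l, (inc i x - inc j x) l ∈ M := by
      intro l
      rw [e]
      refine sub_mem ?_ ?_ <;> split_ifs <;> first | exact hx | exact zero_mem _
    refine mem_LMN_of hp (hp.1 (hmem 0)) (sub_mem (hmem 1) (hmem 0)) (sub_mem (hmem 2) (hmem 0)) ?_
    have : (inc i x - inc j x) 0 + (inc i x - inc j x) 1 + (inc i x - inc j x) 2 = 0 := by
      rw [e, e, e]
      fin_cases i <;> fin_cases j <;> simp at hij ⊢
    rw [this]; exact zero_mem _
  have htwo : ∀ u ∈ Υ, ∀ i : Fin 3, (2 : ℝ) • inc i u ∈ LMN M N 3 := by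
    intro u hu i
    rw [← map_smul]
    have hmem : ∀ l, (inc i ((2 : ℝ) • u)) l ∈ M ⊓ N := by
      intro l
      rw [inc_apply]
      split_ifs
      · exact ⟨hp.two_left hu, hp.two_right hu⟩
      · exact zero_mem _
    exact mem_LMN_of hp (hp.1 (hmem 0).1) (sub_mem (hmem 1).1 (hmem 0).1)
      (sub_mem (hmem 2).1 (hmem 0).1) (add_mem (add_mem (hmem 0).2 (hmem 1).2) (hmem 2).2)
  refine ⟨isLat_of_two (cube_isLat h.lat) ?_ ?_, LMN_even hp hM.even hN.even, ?_⟩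
  · intro v hv
    rw [← sum_inc v]
    have hc := LMN_comp_mem hp hv
    exact Submodule.add_mem_sup (Submodule.add_mem_sup (mem_img.mpr ⟨_, hc 0, rfl⟩)
      (mem_img.mpr ⟨_, hc 1, rfl⟩)) (mem_img.mpr ⟨_, hc 2, rfl⟩)
  · intro v hv
    obtain ⟨v', hv', v2, ⟨x2, hx2, rfl⟩, rfl⟩ := Submodule.mem_sup.mp hv
    obtain ⟨v0, ⟨x0, hx0, rfl⟩, v1, ⟨x1, hx1, rfl⟩, rfl⟩ := Submodule.mem_sup.mp hv'
    rw [smul_add, smul_add]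
    exact add_mem (add_mem (htwo x0 hx0 0) (htwo x1 hx1 1)) (htwo x2 hx2 2)
  · intro v hv
    have hinc : ∀ (i : Fin 3) (x : V), ⟪v, inc i x⟫ = ⟪v i, x⟫ := by
      intro i x
      rw [inner3, inc_apply, inc_apply, inc_apply]
      fin_cases i <;> simp
    refine mem_LMN_of hp ?_ ?_ ?_ ?_
    · apply h.dual
      intro u hu
      obtain ⟨n, hn⟩ := hv _ (htwo u hu 0)
      exact ⟨n, by rw [← hn, inner_smul_right, hinc]⟩
    · apply hM.dual
      intro x hx
      obtain ⟨n, hn⟩ := hv _ (hpair x hx 1 0 (by decide))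
      exact ⟨n, by rw [← hn, inner_sub_right, hinc, hinc, inner_sub_left]⟩
    · apply hM.dual
      intro x hx
      obtain ⟨n, hn⟩ := hv _ (hpair x hx 2 0 (by decide))
      exact ⟨n, by rw [← hn, inner_sub_right, hinc, hinc, inner_sub_left]⟩
    · apply hN.dual
      intro w hw
      obtain ⟨n, hn⟩ := hv (tri w w w) (mem_LMN_of hp (hp.2.1 hw)
        (by rw [tri0, tri1, sub_self]; exact zero_mem _)
        (by rw [tri0, tri2, sub_self]; exact zero_mem _)
        (by rw [tri0, tri1, tri2]; exact add_mem (add_mem hw hw) hw))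
      exact ⟨n, by rw [← hn, inner3, tri0, tri1, tri2, inner_add_left, inner_add_left]⟩

theorem LMN_min {Υ M N : Submodule ℤ V} (hp : IsPolarization Υ M N) {ν μ : ℝ} (hν0 : 0 ≤ ν)
    (hνμ : 3 * ν ≤ 2 * μ) (hν : ∀ x ∈ Υ, x ≠ 0 → ν ≤ ⟪x, x⟫) (hμ : ∀ x ∈ M, x ≠ 0 → μ ≤ ⟪x, x⟫)
    {v : PiLp 2 fun _ : Fin 3 => V} (hv : v ∈ LMN M N 3) (hv0 : v ≠ 0) : 3 * ν ≤ ⟪v, v⟫ := by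
  have hc := LMN_comp_mem hp hv
  have hs := LMN_sum_mem hp hv
  have hM : ∀ i, v i = 0 → ∀ j, v j ∈ M := by
    obtain ⟨w, hw, h1, -⟩ := mem_LMN.mp hv
    intro i hi j
    have := sub_mem (h1 j) (h1 i)
    rwa [hi, sub_sub_sub_cancel_right, sub_zero] at this
  have h4 : ∀ x, x ≠ 0 → x ∈ M → x ∈ N → 3 * ν ≤ ⟪x, x⟫ := by
    intro x hx0 hxM hxN
    have : x ∈ M ⊓ N := ⟨hxM, hxN⟩
    rw [hp.2.2.2.2.2] at this
    obtain ⟨u, hu, rfl⟩ := mem_two_smul.mp this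
    have := hν u hu (by rintro rfl; simp at hx0)
    rw [real_inner_smul_left, real_inner_smul_right]
    linarith
  have hnn : ∀ i, 0 ≤ ⟪v i, v i⟫ := fun i => real_inner_self_nonneg
  rw [inner3]
  have n0 := hnn 0
  have n1 := hnn 1
  have n2 := hnn 2
  by_cases a0 : v 0 = 0 <;> by_cases a1 : v 1 = 0 <;> by_cases a2 : v 2 = 0
  · exfalso
    apply hv0
    ext i
    fin_cases i
    · exact a0
    · exact a1
    · exact a2
  · rw [a0, a1, zero_add, zero_add] at hs
    linarith [h4 _ a2 (hM 0 a0 2) hs]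
  · rw [a0, a2, zero_add, add_zero] at hs
    linarith [h4 _ a1 (hM 0 a0 1) hs]
  · linarith [hμ _ (hM 0 a0 1) a1, hμ _ (hM 0 a0 2) a2]
  · rw [a1, a2, add_zero, add_zero] at hs
    linarith [h4 _ a0 (hM 1 a1 0) hs]
  · linarith [hμ _ (hM 1 a1 0) a0, hμ _ (hM 1 a1 2) a2]
  · linarith [hμ _ (hM 2 a2 0) a0, hμ _ (hM 2 a2 1) a1]
  · linarith [hν _ (hc 0) a0, hν _ (hc 1) a1, hν _ (hc 2) a2]

/-! ### The lattice `E₈/√2` with an action of `ℤ[(1+√-7)/2]` -/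

/-- The action of `(1+√-7)/2` through a skew Hadamard matrix. -/
def aE : EuclideanSpace ℝ (Fin 8) →ₗ[ℝ] EuclideanSpace ℝ (Fin 8) where
  toFun v := !₂[(v 0 + v 1 + v 2 - v 3 + v 4 - v 5 - v 6 - v 7) / 2,
    (-v 0 + v 1 + v 2 + v 3 - v 4 + v 5 - v 6 - v 7) / 2,
    (-v 0 - v 1 + v 2 + v 3 + v 4 - v 5 + v 6 - v 7) / 2,
    (v 0 - v 1 - v 2 + v 3 + v 4 + v 5 - v 6 - v 7) / 2,
    (-v 0 + v 1 - v 2 - v 3 + v 4 + v 5 + v 6 - v 7) / 2,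
    (v 0 - v 1 + v 2 - v 3 - v 4 + v 5 + v 6 - v 7) / 2,
    (v 0 + v 1 - v 2 + v 3 - v 4 - v 5 + v 6 - v 7) / 2,
    (v 0 + v 1 + v 2 + v 3 + v 4 + v 5 + v 6 + v 7) / 2]
  map_add' x y := by
    ext i; fin_cases i <;> simp <;> ring
  map_smul' c x := by
    ext i; fin_cases i <;> simp <;> ring

/-- A parametrization of `E₈/√2`. -/
def fE : (Fin 8 → ℤ) →ₗ[ℤ] EuclideanSpace ℝ (Fin 8) where
  toFun p := !₂[(p 0 : ℝ) / 2, (p 1 : ℝ) / 2, (p 2 : ℝ) / 2, (p 3 : ℝ) / 2,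
    ((p 0 + p 2 + p 3 + 2 * p 4 : ℤ) : ℝ) / 2, ((p 0 + p 1 + p 2 + 2 * p 5 : ℤ) : ℝ) / 2,
    ((p 1 + p 2 + p 3 + 2 * p 6 : ℤ) : ℝ) / 2, ((p 0 + p 1 + p 3 + 2 * p 7 : ℤ) : ℝ) / 2]
  map_add' x y := by
    ext i; fin_cases i <;> simp <;> ring
  map_smul' c x := by
    ext i; fin_cases i <;> simp <;> ring

theorem inner8 (x y : EuclideanSpace ℝ (Fin 8)) : ⟪x, y⟫ =
    x 0 * y 0 + x 1 * y 1 + x 2 * y 2 + x 3 * y 3 + x 4 * y 4 + x 5 * y 5 + x 6 * y 6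
      + x 7 * y 7 := by
  rw [PiLp.inner_apply, Fin.sum_univ_eight]
  simp [mul_comm]

theorem aE_alpha : Alpha aE := by
  constructor
  · intro x y
    rw [inner8, inner8]
    simp [aE]
    ring
  · intro x
    ext i; fin_cases i <;> simp [aE] <;> ring

/-- `E₈/√2`. -/
def E8h : Submodule ℤ (EuclideanSpace ℝ (Fin 8)) := LinearMap.range fE

theorem E8h_stable : ∀ x ∈ E8h, aE x ∈ E8h := by
  rintro _ ⟨p, rfl⟩
  refine ⟨![-p 1 - p 3 + p 4 - p 5 - p 6 - p 7,
      -p 0 - p 3 - p 4 + p 5 - p 6 - p 7,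
      -p 0 - p 1 + p 2 + p 3 + p 4 - p 5 + p 6 - p 7,
      p 0 - p 1 + p 4 + p 5 - p 6 - p 7,
      2 * p 1 - p 4 + p 5 + p 6 + p 7,
      p 0 + p 1 - p 4 + p 5 + p 6 + p 7,
      p 1 - p 2 - p 4 - p 5 + p 6 + p 7,
      p 0 + 2 * p 1 + p 2 + 2 * p 3 + 2 * p 6 + 2 * p 7], ?_⟩
  ext i; fin_cases i <;> simp [aE, fE] <;> ring

theorem single_mem_E8h (i : Fin 8) : EuclideanSpace.single i (1 : ℝ) ∈ E8h := by
  fin_cases i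
  · refine ⟨![2, 0, 0, 0, -1, -1, 0, -1], ?_⟩
    ext i; fin_cases i <;> simp [fE]
  · refine ⟨![0, 2, 0, 0, 0, -1, -1, -1], ?_⟩
    ext i; fin_cases i <;> simp [fE]
  · refine ⟨![0, 0, 2, 0, -1, -1, -1, 0], ?_⟩
    ext i; fin_cases i <;> simp [fE]
  · refine ⟨![0, 0, 0, 2, -1, 0, -1, -1], ?_⟩
    ext i; fin_cases i <;> simp [fE]
  · refine ⟨![0, 0, 0, 0, 1, 0, 0, 0], ?_⟩
    ext i; fin_cases i <;> simp [fE]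
  · refine ⟨![0, 0, 0, 0, 0, 1, 0, 0], ?_⟩
    ext i; fin_cases i <;> simp [fE]
  · refine ⟨![0, 0, 0, 0, 0, 0, 1, 0], ?_⟩
    ext i; fin_cases i <;> simp [fE]
  · refine ⟨![0, 0, 0, 0, 0, 0, 0, 1], ?_⟩
    ext i; fin_cases i <;> simp [fE]

theorem E8h_inner (p q : Fin 8 → ℤ) : 4 * ⟪fE p, fE q⟫ =
    ((p 0 * q 0 + p 1 * q 1 + p 2 * q 2 + p 3 * q 3
    + (p 0 + p 2 + p 3 + 2 * p 4) * (q 0 + q 2 + q 3 + 2 * q 4)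
    + (p 0 + p 1 + p 2 + 2 * p 5) * (q 0 + q 1 + q 2 + 2 * q 5)
    + (p 1 + p 2 + p 3 + 2 * p 6) * (q 1 + q 2 + q 3 + 2 * q 6)
    + (p 0 + p 1 + p 3 + 2 * p 7) * (q 0 + q 1 + q 3 + 2 * q 7) : ℤ) : ℝ) := by
  rw [inner8]
  simp [fE]
  ring

theorem E8h_good : Good E8h := by
  refine ⟨⟨?_, ?_⟩, ?_, ?_, ?_⟩
  · exact Module.Finite.iff_fg.mp (Module.Finite.range fE)
  · rw [eq_top_iff, ← (EuclideanSpace.basisFun (Fin 8) ℝ).toBasis.span_eq, Submodule.span_le]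
    rintro _ ⟨i, rfl⟩
    refine Submodule.subset_span ?_
    simpa using single_mem_E8h i
  · rintro _ ⟨p, rfl⟩
    have h := E8h_inner p p
    refine ⟨p 0 ^ 2 + p 1 ^ 2 + p 2 ^ 2 + p 3 ^ 2 + p 4 ^ 2 + p 5 ^ 2 + p 6 ^ 2 + p 7 ^ 2
      + p 4 * (p 0 + p 2 + p 3) + p 5 * (p 0 + p 1 + p 2) + p 6 * (p 1 + p 2 + p 3)
      + p 7 * (p 0 + p 1 + p 3) + p 0 * p 1 + p 0 * p 2 + p 0 * p 3 + p 1 * p 2 + p 1 * p 3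
      + p 2 * p 3, ?_⟩
    push_cast at h ⊢
    linarith
  · rintro _ ⟨p, rfl⟩ _ ⟨q, rfl⟩
    have h := E8h_inner p q
    refine ⟨2 * (p 0 * q 0 + p 1 * q 1 + p 2 * q 2 + p 3 * q 3)
      + (p 0 * q 1 + p 0 * q 2 + p 0 * q 3 + p 1 * q 2 + p 1 * q 3 + p 2 * q 3)
      + (q 0 * p 1 + q 0 * p 2 + q 0 * p 3 + q 1 * p 2 + q 1 * p 3 + q 2 * p 3)
      + p 4 * (q 0 + q 2 + q 3) + q 4 * (p 0 + p 2 + p 3) + 2 * (p 4 * q 4)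
      + p 5 * (q 0 + q 1 + q 2) + q 5 * (p 0 + p 1 + p 2) + 2 * (p 5 * q 5)
      + p 6 * (q 1 + q 2 + q 3) + q 6 * (p 1 + p 2 + p 3) + 2 * (p 6 * q 6)
      + p 7 * (q 0 + q 1 + q 3) + q 7 * (p 0 + p 1 + p 3) + 2 * (p 7 * q 7), ?_⟩
    push_cast at h ⊢
    linarith
  · intro v hv
    have hz : ∀ i, ∃ z : ℤ, 2 * v i = (z : ℝ) := by
      intro i
      obtain ⟨n, hn⟩ := hv _ (single_mem_E8h i)
      exact ⟨n, by rw [← hn]; simp [EuclideanSpace.inner_single_right]⟩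
    choose z hz using hz
    obtain ⟨n0, h0⟩ := hv (fE ![1, 0, 0, 0, 0, 0, 0, 0]) ⟨_, rfl⟩
    obtain ⟨n1, h1⟩ := hv (fE ![0, 1, 0, 0, 0, 0, 0, 0]) ⟨_, rfl⟩
    obtain ⟨n2, h2⟩ := hv (fE ![0, 0, 1, 0, 0, 0, 0, 0]) ⟨_, rfl⟩
    obtain ⟨n3, h3⟩ := hv (fE ![0, 0, 0, 1, 0, 0, 0, 0]) ⟨_, rfl⟩
    rw [inner8] at h0 h1 h2 h3
    simp [fE] at h0 h1 h2 h3
    have z0 := hz 0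
    have z1 := hz 1
    have z2 := hz 2
    have z3 := hz 3
    have z4 := hz 4
    have z5 := hz 5
    have z6 := hz 6
    have z7 := hz 7
    have g0 : z 0 + z 4 + z 5 + z 7 = 2 * n0 := by
      have : ((z 0 + z 4 + z 5 + z 7 : ℤ) : ℝ) = ((2 * n0 : ℤ) : ℝ) := by push_cast; linarith
      exact_mod_cast this
    have g1 : z 1 + z 5 + z 6 + z 7 = 2 * n1 := by
      have : ((z 1 + z 5 + z 6 + z 7 : ℤ) : ℝ) = ((2 * n1 : ℤ) : ℝ) := by push_cast; linarith
      exact_mod_cast this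
    have g2 : z 2 + z 4 + z 5 + z 6 = 2 * n2 := by
      have : ((z 2 + z 4 + z 5 + z 6 : ℤ) : ℝ) = ((2 * n2 : ℤ) : ℝ) := by push_cast; linarith
      exact_mod_cast this
    have g3 : z 3 + z 4 + z 6 + z 7 = 2 * n3 := by
      have : ((z 3 + z 4 + z 6 + z 7 : ℤ) : ℝ) = ((2 * n3 : ℤ) : ℝ) := by push_cast; linarith
      exact_mod_cast this
    obtain ⟨p4, k4⟩ : ∃ k, z 4 = z 0 + z 2 + z 3 + 2 * k :=
      ⟨(z 4 - (z 0 + z 2 + z 3)) / 2, by omega⟩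
    obtain ⟨p5, k5⟩ : ∃ k, z 5 = z 0 + z 1 + z 2 + 2 * k :=
      ⟨(z 5 - (z 0 + z 1 + z 2)) / 2, by omega⟩
    obtain ⟨p6, k6⟩ : ∃ k, z 6 = z 1 + z 2 + z 3 + 2 * k :=
      ⟨(z 6 - (z 1 + z 2 + z 3)) / 2, by omega⟩
    obtain ⟨p7, k7⟩ : ∃ k, z 7 = z 0 + z 1 + z 3 + 2 * k :=
      ⟨(z 7 - (z 0 + z 1 + z 3)) / 2, by omega⟩
    refine ⟨![z 0, z 1, z 2, z 3, p4, p5, p6, p7], ?_⟩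
    rw [k4] at z4
    rw [k5] at z5
    rw [k6] at z6
    rw [k7] at z7
    push_cast at z4 z5 z6 z7
    ext i; fin_cases i <;> simp [fE] <;> linarith

/-! ### The second level -/

/-- The diagonal action on `V³`. -/
def a3 (a : V →ₗ[ℝ] V) : (PiLp 2 fun _ : Fin 3 => V) →ₗ[ℝ] (PiLp 2 fun _ : Fin 3 => V) where
  toFun v := WithLp.toLp 2 (fun i => a (v i))
  map_add' x y := by ext i; exact map_add a (x i) (y i)
  map_smul' c x := by ext i; exact map_smul a c (x i)

theorem a3_apply (a : V →ₗ[ℝ] V) (v : PiLp 2 fun _ : Fin 3 => V) (i : Fin 3) :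
    a3 a v i = a (v i) := rfl

theorem a3_alpha {a : V →ₗ[ℝ] V} (ha : Alpha a) : Alpha (a3 a) := by
  constructor
  · intro x y
    rw [inner3, inner3]
    simp only [a3_apply, ha.adj]
    rfl
  · intro x
    ext i
    exact ha.sq (x i)

theorem a3_stable {a : V →ₗ[ℝ] V} {M N : Submodule ℤ V} (hM : ∀ x ∈ M, a x ∈ M)
    (hN : ∀ x ∈ N, a x ∈ N) : ∀ v ∈ LMN M N 3, a3 a v ∈ LMN M N 3 := by
  intro v hv
  obtain ⟨w, hw, h1, h2⟩ := mem_LMN.mp hv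
  refine mem_LMN.mpr ⟨a w, hN w hw, fun i => ?_, ?_⟩
  · rw [a3_apply, ← map_sub]; exact hM _ (h1 i)
  · rw [a3_apply, a3_apply, a3_apply, ← map_sub, ← map_sub, ← map_sub, ← map_add, ← map_add]
    exact ⟨hM _ h2.1, hN _ h2.2⟩

/-- The inverse of `a`. -/
def ainv (a : V →ₗ[ℝ] V) : V →ₗ[ℝ] V := (2⁻¹ : ℝ) • (LinearMap.id - a)

theorem Alpha.a_ainv {a : V →ₗ[ℝ] V} (ha : Alpha a) (x : V) : a (ainv a x) = x := by
  simp only [ainv, LinearMap.smul_apply, LinearMap.sub_apply, LinearMap.id_apply, map_smul,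
    map_sub, ha.sq]
  module

theorem Alpha.ainv_a {a : V →ₗ[ℝ] V} (ha : Alpha a) (x : V) : ainv a (a x) = x := by
  simp only [ainv, LinearMap.smul_apply, LinearMap.sub_apply, LinearMap.id_apply, ha.sq]
  module

theorem Alpha.inner_ainv {a : V →ₗ[ℝ] V} (ha : Alpha a) (x y : V) :
    2 * ⟪ainv a x, ainv a y⟫ = ⟪x, y⟫ := by
  rw [← ha.inner, ha.a_ainv, ha.a_ainv]

theorem Alpha.good {a : V →ₗ[ℝ] V} (ha : Alpha a) {L : Submodule ℤ V} (h : SD L)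
    (hs : ∀ x ∈ L, a x ∈ L) : Good (img (ainv a) L) := by
  refine ⟨⟨h.lat.1.map _, ?_⟩, ?_, ?_, ?_⟩
  · rw [eq_top_iff, ← h.lat.2]
    refine Submodule.span_mono ?_
    intro x hx
    exact mem_img.mpr ⟨a x, hs x hx, ha.ainv_a x⟩
  · rintro _ ⟨x, hx, rfl⟩
    obtain ⟨n, hn⟩ := h.even.2 x hx
    refine ⟨n, ?_⟩
    have := ha.inner_ainv x x
    change ⟪ainv a x, ainv a x⟫ = _
    linarith
  · rintro _ ⟨x, hx, rfl⟩ _ ⟨y, hy, rfl⟩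
    obtain ⟨n, hn⟩ := h.even.1 x hx y hy
    exact ⟨n, (ha.inner_ainv x y).trans hn⟩
  · intro v hv
    refine mem_img.mpr ⟨a v, ?_, ha.ainv_a v⟩
    apply h.dual
    intro x hx
    obtain ⟨n, hn⟩ := hv (ainv a x) (mem_img.mpr ⟨x, hx, rfl⟩)
    refine ⟨n, ?_⟩
    rw [← hn, ← ha.inner, ha.a_ainv]

theorem Good.one_le {Υ : Submodule ℤ V} (h : Good Υ) : ∀ x ∈ Υ, x ≠ 0 → (1 : ℝ) ≤ ⟪x, x⟫ := by
  intro x hx hx0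
  obtain ⟨n, hn⟩ := h.norm x hx
  have hpos : 0 < ⟪x, x⟫ := real_inner_self_pos.mpr hx0
  rw [hn] at hpos ⊢
  have : 0 < n := by exact_mod_cast hpos
  exact_mod_cast this

theorem even_two_le {M : Submodule ℤ V} (h : IsEvenLat M) :
    ∀ x ∈ M, x ≠ 0 → (2 : ℝ) ≤ ⟪x, x⟫ := by
  intro x hx hx0
  obtain ⟨n, hn⟩ := h.2 x hx
  have hpos : 0 < ⟪x, x⟫ := real_inner_self_pos.mpr hx0
  rw [hn] at hpos ⊢
  have h1 : 0 < n := by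
    have : (0 : ℝ) < n := by linarith
    exact_mod_cast this
  have h2 : (1 : ℝ) ≤ n := by exact_mod_cast h1
  linarith

theorem LMN_four_le {Υ M N : Submodule ℤ V} (h : Good Υ) (hp : IsPolarization Υ M N)
    (hM : IsEvenLat M) (hN : IsEvenLat N) :
    ∀ v ∈ LMN M N 3, v ≠ 0 → (4 : ℝ) ≤ ⟪v, v⟫ := by
  intro v hv hv0
  have h3 := LMN_min hp (ν := 1) (μ := 2) (by norm_num) (by norm_num) h.one_le
    (even_two_le hM) hv hv0
  obtain ⟨n, hn⟩ := (LMN_even hp hM hN).2 v hv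
  rw [hn] at h3 ⊢
  have h1 : (1 : ℝ) < n := by linarith
  have h2 : 1 < n := by exact_mod_cast h1
  have h4 : (2 : ℝ) ≤ n := by exact_mod_cast h2
  linarith

/-- A polarization of `Leech/√2` by the Leech lattice and a lattice with roots. -/
theorem exists_leech_pol :
    ∃ Υ M N : Submodule ℤ (PiLp 2 fun _ : Fin 3 => EuclideanSpace ℝ (Fin 8)),
      Good Υ ∧ SD M ∧ SD N ∧ IsPolarization Υ M N ∧ (∀ x ∈ Υ, x ≠ 0 → (2 : ℝ) ≤ ⟪x, x⟫) ∧
      (∀ x ∈ M, x ≠ 0 → (4 : ℝ) ≤ ⟪x, x⟫) ∧ ∃ v ∈ N, ⟪v, v⟫ = (2 : ℝ) := by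
  have ha := aE_alpha
  have hE := E8h_good
  have hst := E8h_stable
  have hst' : ∀ x ∈ E8h, (LinearMap.id - aE : _ →ₗ[ℝ] _) x ∈ E8h :=
    fun x hx => sub_mem hx (hst x hx)
  have hM0 := ha.sd hE hst
  have hN0 := ha.bar.sd hE hst'
  have hp0 := ha.pol hE hst
  set M0 := img aE E8h with hM0def
  set N0 := img (LinearMap.id - aE) E8h with hN0def
  have sM0 : ∀ x ∈ M0, aE x ∈ M0 := by
    rintro _ ⟨x, hx, rfl⟩
    exact mem_img.mpr ⟨aE x, hst x hx, rfl⟩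
  have sN0 : ∀ x ∈ N0, aE x ∈ N0 := by
    rintro _ ⟨x, hx, rfl⟩
    exact mem_img.mpr ⟨aE x, hst x hx, by simp⟩
  have hL := LMN_sd hE hp0 hM0 hN0
  have hL4 := LMN_four_le hE hp0 hM0.even hN0.even
  have hb := a3_alpha ha
  have hLs := a3_stable sM0 sN0
  have hΥ := hb.good hL hLs
  have hΥs : ∀ x ∈ img (ainv (a3 aE)) (LMN M0 N0 3), a3 aE x ∈ img (ainv (a3 aE)) (LMN M0 N0 3) := by
    rintro _ ⟨x, hx, rfl⟩
    refine mem_img.mpr ⟨a3 aE x, hLs x hx, ?_⟩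
    rw [hb.ainv_a]
    exact (hb.a_ainv x).symm
  have hM := hb.sd hΥ hΥs
  have hN := hb.bar.sd hΥ (fun x hx => sub_mem hx (hΥs x hx))
  have hp := hb.pol hΥ hΥs
  set Υ := img (ainv (a3 aE)) (LMN M0 N0 3) with hΥdef
  have hΥ2 : ∀ x ∈ Υ, x ≠ 0 → (2 : ℝ) ≤ ⟪x, x⟫ := by
    rintro _ ⟨x, hx, rfl⟩ h0
    have h1 : x ≠ 0 := by rintro rfl; exact h0 (map_zero _)
    have h2 := hL4 x hx h1
    have h3 := hb.inner_ainv x x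
    change 2 ≤ ⟪ainv (a3 aE) x, ainv (a3 aE) x⟫
    linarith
  have hM4 : ∀ x ∈ img (a3 aE) Υ, x ≠ 0 → (4 : ℝ) ≤ ⟪x, x⟫ := by
    rintro _ ⟨x, hx, rfl⟩ h0
    have h1 : x ≠ 0 := by rintro rfl; exact h0 (map_zero _)
    have h2 := hΥ2 x hx h1
    have h3 := hb.inner x x
    change 4 ≤ ⟪a3 aE x, a3 aE x⟫
    linarith
  let e : EuclideanSpace ℝ (Fin 8) := EuclideanSpace.single 0 1
  have he : e ∈ E8h := single_mem_E8h 0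
  have hee : ⟪e, e⟫ = (1 : ℝ) := by simp [e]
  have hv : tri e (-e) 0 ∈ Υ := by
    refine mem_img.mpr ⟨a3 aE (tri e (-e) 0), ?_, hb.ainv_a _⟩
    have m : aE e ∈ M0 := mem_img.mpr ⟨e, he, rfl⟩
    refine mem_LMN_of hp0 ?_ ?_ ?_ ?_
    · rw [a3_apply, tri0]; exact hst e he
    · rw [a3_apply, a3_apply, tri0, tri1, map_neg]; exact sub_mem (neg_mem m) m
    · rw [a3_apply, a3_apply, tri0, tri2, map_zero]; exact sub_mem (zero_mem _) m
    · rw [a3_apply, a3_apply, a3_apply, tri0, tri1, tri2, map_zero, map_neg]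
      simp
  have hv2 : ⟪tri e (-e) 0, tri e (-e) 0⟫ = (2 : ℝ) := by
    rw [inner3, tri0, tri1, tri2, inner_neg_neg, inner_zero_left, hee]; norm_num
  have hvM : tri e (-e) 0 ∉ img (a3 aE) Υ := by
    intro hh
    have h0 : tri e (-e) 0 ≠ 0 := by
      intro h0; rw [h0] at hv2; simp at hv2
    have := hM4 _ hh h0
    rw [hv2] at this
    norm_num at this
  obtain ⟨N', hpN, hN', hvN⟩ := exists_pol_root hΥ hp hM hN.even hv hv2 hvM
  exact ⟨Υ, _, N', hΥ, hM, hN', hpN, hΥ2, hM4, _, hvN, hv2⟩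

/-! ### Transfer along isometries -/

section transfer

variable {W : Type*} [NormedAddCommGroup W] [InnerProductSpace ℝ W]

/-- Image under an isometry. -/
def tr (f : V ≃ₗᵢ[ℝ] W) (L : Submodule ℤ V) : Submodule ℤ W := img f.toLinearEquiv.toLinearMap L

theorem mem_tr {f : V ≃ₗᵢ[ℝ] W} {L : Submodule ℤ V} {y : W} : y ∈ tr f L ↔ ∃ x ∈ L, f x = y :=
  Iff.rfl

theorem tr_lat (f : V ≃ₗᵢ[ℝ] W) {L : Submodule ℤ V} (h : IsLat L) : IsLat (tr f L) := by
  refine ⟨h.1.map _, ?_⟩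
  rw [eq_top_iff]
  intro y _
  have hx : f.symm y ∈ Submodule.span ℝ (L : Set V) := by rw [h.2]; trivial
  have h1 := Submodule.mem_map_of_mem (f := f.toLinearEquiv.toLinearMap) hx
  rw [Submodule.map_span] at h1
  have e : f.toLinearEquiv.toLinearMap (f.symm y) = y := f.apply_symm_apply y
  rw [e] at h1
  exact h1

theorem tr_good (f : V ≃ₗᵢ[ℝ] W) {L : Submodule ℤ V} (h : Good L) : Good (tr f L) := by
  refine ⟨tr_lat f h.lat, ?_, ?_, ?_⟩
  · rintro _ ⟨x, hx, rfl⟩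
    obtain ⟨n, hn⟩ := h.norm x hx
    exact ⟨n, (f.inner_map_map x x).trans hn⟩
  · rintro _ ⟨x, hx, rfl⟩ _ ⟨y, hy, rfl⟩
    obtain ⟨n, hn⟩ := h.int2 x hx y hy
    exact ⟨n, (congrArg (2 * ·) (f.inner_map_map x y)).trans hn⟩
  · intro v hv
    refine mem_tr.mpr ⟨f.symm v, h.dual _ fun x hx => ?_, f.apply_symm_apply v⟩
    obtain ⟨n, hn⟩ := hv (f x) (mem_tr.mpr ⟨x, hx, rfl⟩)
    exact ⟨n, by rw [← hn, ← f.inner_map_map, f.apply_symm_apply]⟩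

theorem tr_sd (f : V ≃ₗᵢ[ℝ] W) {L : Submodule ℤ V} (h : SD L) : SD (tr f L) := by
  refine ⟨tr_lat f h.lat, ⟨?_, ?_⟩, ?_⟩
  · rintro _ ⟨x, hx, rfl⟩ _ ⟨y, hy, rfl⟩
    obtain ⟨n, hn⟩ := h.even.1 x hx y hy
    exact ⟨n, (f.inner_map_map x y).trans hn⟩
  · rintro _ ⟨x, hx, rfl⟩
    obtain ⟨n, hn⟩ := h.even.2 x hx
    exact ⟨n, (f.inner_map_map x x).trans hn⟩
  · intro v hv
    refine mem_tr.mpr ⟨f.symm v, h.dual _ fun x hx => ?_, f.apply_symm_apply v⟩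
    obtain ⟨n, hn⟩ := hv (f x) (mem_tr.mpr ⟨x, hx, rfl⟩)
    exact ⟨n, by rw [← hn, ← f.inner_map_map, f.apply_symm_apply]⟩

theorem tr_pol (f : V ≃ₗᵢ[ℝ] W) {Υ M N : Submodule ℤ V} (hp : IsPolarization Υ M N)
    (hM : SD M) (hN : SD N) : IsPolarization (tr f Υ) (tr f M) (tr f N) := by
  refine ⟨Submodule.map_mono hp.1, Submodule.map_mono hp.2.1, (tr_sd f hM).even.1,
    (tr_sd f hN).even.1, ?_, ?_⟩
  · rw [← hp.2.2.2.2.1]; exact (Submodule.map_sup _ _ _).symm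
  · ext y
    rw [mem_two_smul]
    constructor
    · rintro ⟨⟨x, hx, rfl⟩, ⟨x', hx', hxx⟩⟩
      have hxx : f x' = f x := hxx
      rw [f.injective hxx] at hx'
      have : x ∈ M ⊓ N := ⟨hx, hx'⟩
      rw [hp.2.2.2.2.2] at this
      obtain ⟨u, hu, rfl⟩ := mem_two_smul.mp this
      exact ⟨f u, mem_tr.mpr ⟨u, hu, rfl⟩, map_smul f _ _⟩
    · rintro ⟨_, ⟨u, hu, rfl⟩, rfl⟩
      exact ⟨mem_tr.mpr ⟨_, hp.two_left hu, map_smul f _ _⟩,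
        mem_tr.mpr ⟨_, hp.two_right hu, map_smul f _ _⟩⟩

theorem tr_min (f : V ≃ₗᵢ[ℝ] W) {L : Submodule ℤ V} {c : ℝ}
    (h : ∀ x ∈ L, x ≠ 0 → c ≤ ⟪x, x⟫) : ∀ x ∈ tr f L, x ≠ 0 → c ≤ ⟪x, x⟫ := by
  rintro _ ⟨x, hx, rfl⟩ h0
  have h1 : x ≠ 0 := by rintro rfl; exact h0 (map_zero _)
  exact (h x hx h1).trans_eq (f.inner_map_map x x).symm

end transfer

theorem minNorm_eq {L : Submodule ℤ V} {c : ℝ} (hc : 0 < c) (h : ∀ x ∈ L, x ≠ 0 → c ≤ ⟪x, x⟫)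
    {v : V} (hv : v ∈ L) (hvc : ⟪v, v⟫ = c) : minNorm L = c := by
  refine IsLeast.csInf_eq ⟨⟨v, hv, ?_, hvc⟩, ?_⟩
  · rintro rfl
    rw [inner_zero_left] at hvc
    exact hc.ne hvc
  · rintro r ⟨x, hx, hx0, rfl⟩
    exact h x hx hx0

/-- An isometry to the standard space. -/
def isoStd (V : Type*) [NormedAddCommGroup V] [InnerProductSpace ℝ V] [FiniteDimensional ℝ V]
    {n : ℕ} (h : finrank ℝ V = n) : V ≃ₗᵢ[ℝ] EuclideanSpace ℝ (Fin n) :=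
  ((stdOrthonormalBasis ℝ V).reindex (finCongr h)).repr

theorem finrank_cube (n : ℕ) :
    finrank ℝ (PiLp 2 fun _ : Fin 3 => EuclideanSpace ℝ (Fin n)) = 3 * n := by
  rw [(WithLp.linearEquiv 2 ℝ (Fin 3 → EuclideanSpace ℝ (Fin n))).finrank_eq,
    Module.finrank_pi_fintype]
  simp

theorem exists_leech_pol24 :
    ∃ Υ M N : Submodule ℤ (EuclideanSpace ℝ (Fin 24)),
      Good Υ ∧ SD M ∧ SD N ∧ IsPolarization Υ M N ∧ (∀ x ∈ Υ, x ≠ 0 → (2 : ℝ) ≤ ⟪x, x⟫) ∧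
      (∀ x ∈ M, x ≠ 0 → (4 : ℝ) ≤ ⟪x, x⟫) ∧ ∃ v ∈ N, ⟪v, v⟫ = (2 : ℝ) := by
  obtain ⟨Υ, M, N, hΥ, hM, hN, hp, h2, h4, v, hv, hv2⟩ := exists_leech_pol
  let f := isoStd _ (finrank_cube 8)
  exact ⟨tr f Υ, tr f M, tr f N, tr_good f hΥ, tr_sd f hM, tr_sd f hN, tr_pol f hp hM hN,
    tr_min f h2, tr_min f h4, f v, mem_tr.mpr ⟨v, hv, rfl⟩, (f.inner_map_map v v).trans hv2⟩

/-- there are polarizations of rank 24 lattices by Niemeier lattices with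
`μ(L(M,N,3)) = 4` and with `μ(L(M,N,3)) = 6`; in particular there is a rank 72 even
unimodular lattice of minimum norm exactly 6. -/
theorem statement10 :
    (∃ Υ M N : Submodule ℤ (EuclideanSpace ℝ (Fin 24)),
      IsLat Υ ∧ SqrtTwoEvenUnimod Υ ∧ IsPolarization Υ M N ∧
      IsLat M ∧ IsEvenLat M ∧ IsUnimodularLat M ∧
      IsLat N ∧ IsEvenLat N ∧ IsUnimodularLat N ∧
      minNorm (LMN M N 3) = 4) ∧
    (∃ Υ M N : Submodule ℤ (EuclideanSpace ℝ (Fin 24)),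
      IsLat Υ ∧ SqrtTwoEvenUnimod Υ ∧ IsPolarization Υ M N ∧
      IsLat M ∧ IsEvenLat M ∧ IsUnimodularLat M ∧
      IsLat N ∧ IsEvenLat N ∧ IsUnimodularLat N ∧
      minNorm (LMN M N 3) = 6) ∧
    (∃ L : Submodule ℤ (EuclideanSpace ℝ (Fin 72)),
      IsLat L ∧ IsEvenLat L ∧ IsUnimodularLat L ∧ minNorm L = 6) := by
  obtain ⟨Υ, M, N, hΥ, hM, hN, hp, h2, h4, v, hv, hv2⟩ := exists_leech_pol24
  have hL := LMN_sd hΥ hp hM hN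
  have hmin6 : ∀ x ∈ LMN M N 3, x ≠ 0 → (6 : ℝ) ≤ ⟪x, x⟫ := by
    intro x hx hx0
    have := LMN_min hp (ν := 2) (μ := 4) (by norm_num) (by norm_num) h2 h4 hx hx0
    linarith
  have hvL : tri v v v ∈ LMN M N 3 := mem_LMN_of hp (hp.2.1 hv)
    (by rw [tri0, tri1, sub_self]; exact zero_mem _)
    (by rw [tri0, tri2, sub_self]; exact zero_mem _)
    (by rw [tri0, tri1, tri2]; exact add_mem (add_mem hv hv) hv)
  have hv6 : ⟪tri v v v, tri v v v⟫ = (6 : ℝ) := by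
    rw [inner3, tri0, tri1, tri2, hv2]; norm_num
  refine ⟨⟨Υ, N, M, hΥ.lat, hΥ.sqrtTwo, hp.symm, hN.lat, hN.even, hN.unimodular, hM.lat,
    hM.even, hM.unimodular, ?_⟩, ⟨Υ, M, N, hΥ.lat, hΥ.sqrtTwo, hp, hM.lat, hM.even,
    hM.unimodular, hN.lat, hN.even, hN.unimodular, ?_⟩, ?_⟩
  · refine minNorm_eq (v := tri v (-v) 0) (by norm_num)
      (LMN_four_le hΥ hp.symm hN.even hM.even) ?_ ?_
    · refine mem_LMN_of hp.symm (hp.2.1 hv) ?_ ?_ ?_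
      · rw [tri0, tri1]; exact sub_mem (neg_mem hv) hv
      · rw [tri0, tri2]; exact sub_mem (zero_mem _) hv
      · rw [tri0, tri1, tri2]; simp
    · rw [inner3, tri0, tri1, tri2, inner_neg_neg, inner_zero_left, hv2]; norm_num
  · exact minNorm_eq (by norm_num) hmin6 hvL hv6
  · let f := isoStd _ (finrank_cube 24)
    have hT := tr_sd f hL
    exact ⟨tr f (LMN M N 3), hT.lat, hT.even, hT.unimodular,
      minNorm_eq (by norm_num) (tr_min f hmin6) (mem_tr.mpr ⟨_, hvL, rfl⟩)
        ((f.inner_map_map _ _).trans hv6)⟩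
end
end

section
/- Let V be a 24-dimensional real inner product space, Υ a lattice in V such that √2·Υ is even and unimodular, and M, N a polarization of Υ in which M and N are both even unimodular lattices (Niemeier lattices). If μ(L(M,N,3)) = 8, then μ(M) = 4 and μ(N) = 4 (i.e. both M and N are Leech lattices). -/
noncomputable section

open scoped RealInnerProductSpace Pointwise
open Module

variable {V : Type*} [NormedAddCommGroup V] [InnerProductSpace ℝ V]

/-- Four points within squared distance `< 2` of a common point cannot have all mutual
squared distances `≥ 6`. -/
theorem four_points {a b c d : V} (ha : ⟪a, a⟫ < 2) (hb : ⟪b, b⟫ < 2) (hc : ⟪c, c⟫ < 2)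
    (hd : ⟪d, d⟫ < 2) (hab : 6 ≤ ⟪a - b, a - b⟫) (hac : 6 ≤ ⟪a - c, a - c⟫)
    (had : 6 ≤ ⟪a - d, a - d⟫) (hbc : 6 ≤ ⟪b - c, b - c⟫) (hbd : 6 ≤ ⟪b - d, b - d⟫)
    (hcd : 6 ≤ ⟪c - d, c - d⟫) : False := by
  have h : 0 ≤ ⟪a + b + c + d, a + b + c + d⟫ := real_inner_self_nonneg
  simp only [inner_add_left, inner_add_right, inner_sub_left, inner_sub_right] at *
  have e1 := real_inner_comm a b
  have e2 := real_inner_comm a c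
  have e3 := real_inner_comm a d
  have e4 := real_inner_comm b c
  have e5 := real_inner_comm b d
  have e6 := real_inner_comm c d
  linarith

/-- If translates of `s` cover every point at most `3` times, then `μ s ≤ 3 μ F`. -/
theorem measure_le_three {E L : Type*} [MeasurableSpace E] {μ : MeasureTheory.Measure E}
    {F s : Set E} [AddGroup L] [Countable L] [AddAction L E]
    [MeasurableSpace L] [MeasurableVAdd L E] [MeasureTheory.VAddInvariantMeasure L E μ]
    (fund : MeasureTheory.IsAddFundamentalDomain L F μ) (hS : MeasurableSet s)
    (h : ∀ x : E, ∀ t : Finset L, (∀ g ∈ t, x ∈ g +ᵥ s) → t.card ≤ 3) :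
    μ s ≤ 3 * μ F := by
  classical
  rw [fund.measure_eq_tsum s]
  have hm : ∀ g : L, MeasurableSet (g +ᵥ s) := fun g => hS.const_vadd g
  calc ∑' g : L, μ ((g +ᵥ s) ∩ F)
      = ∑' g : L, ∫⁻ x in F, (g +ᵥ s).indicator 1 x ∂μ := by
        refine tsum_congr fun g => ?_
        rw [MeasureTheory.lintegral_indicator_one (hm g),
          MeasureTheory.Measure.restrict_apply (hm g)]
    _ = ∫⁻ x in F, ∑' g : L, (g +ᵥ s).indicator 1 x ∂μ := by
        rw [MeasureTheory.lintegral_tsum]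
        intro g
        exact (measurable_one.indicator (hm g)).aemeasurable
    _ ≤ ∫⁻ x in F, 3 ∂μ := by
        refine MeasureTheory.lintegral_mono fun x => ?_
        rw [ENNReal.tsum_eq_iSup_sum]
        refine iSup_le fun t => ?_
        have h1 := h x (t.filter fun g => x ∈ g +ᵥ s) (by simp)
        simp only [Set.indicator_apply, Pi.one_apply]
        rw [Finset.sum_boole]
        exact_mod_cast h1
    _ = 3 * μ F := by simp

/-- A rank 24 unimodular lattice has a nonzero vector of norm `< 6` (Blichfeldt). -/
theorem exists_short [FiniteDimensional ℝ V] (hdim : finrank ℝ V = 24)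
    (M : Submodule ℤ V) (hlat : IsLat M) (hM : IsUnimodularLat M) :
    ∃ x ∈ M, x ≠ 0 ∧ ⟪x, x⟫ < 6 := by
  by_contra! hcon
  obtain ⟨n, b, hb⟩ := hM
  let _ : MeasurableSpace V := borel V
  have : BorelSpace V := ⟨rfl⟩
  have hdet : (Matrix.gram ℝ fun i => (b i : V)).det = 1 := hb
  have hli : LinearIndependent ℝ fun i => (b i : V) :=
    Matrix.linearIndependent_of_det_gram_ne_zero (by rw [hdet]; exact one_ne_zero)
  have hspanZ : Submodule.span ℤ (Set.range fun i => (b i : V)) = M := by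
    have h1 := b.span_eq
    have h2 := congrArg (Submodule.map M.subtype) h1
    rw [Submodule.map_span, Submodule.map_top, Submodule.range_subtype, ← Set.range_comp] at h2
    exact h2
  have hspan : Submodule.span ℝ (Set.range fun i => (b i : V)) = ⊤ := by
    rw [← hlat.2, ← Submodule.span_span_of_tower ℤ ℝ (Set.range fun i => (b i : V))]
    exact congrArg (fun L : Submodule ℤ V => Submodule.span ℝ (L : Set V)) hspanZ
  let B : Basis (Fin n) ℝ V := Basis.mk hli hspan.ge
  have hB : ∀ i, B i = (b i : V) := fun i => by simp [B]
  have hBf : (⇑B) = fun i => (b i : V) := funext hB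
  have hn : n = 24 := by
    rw [← hdim, finrank_eq_card_basis B, Fintype.card_fin]
  have hBM : Submodule.span ℤ (Set.range B) = M := by rw [hBf]; exact hspanZ
  let o : OrthonormalBasis (Fin n) ℝ V := (stdOrthonormalBasis ℝ V).reindex
    (finCongr (by rw [hdim, hn]))
  have hvol : MeasureTheory.volume (ZSpan.fundamentalDomain B) = 1 := by
    rw [ZSpan.measure_fundamentalDomain B MeasureTheory.volume o.toBasis,
      MeasureTheory.measure_congr (ZSpan.fundamentalDomain_ae_parallelepiped o.toBasis _),
      OrthonormalBasis.coe_toBasis, o.volume_parallelepiped, mul_one]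
    have h1 := Matrix.gram_eq_conjTranspose_mul (𝕜 := ℝ) o (fun i => (b i : V))
    have h2 : (Matrix.of fun i j => o.repr (b j : V) i) = o.toBasis.toMatrix B := by
      ext i j
      simp [Basis.toMatrix_apply, hB]
    have h3 : (o.toBasis.det B) ^ 2 = 1 := by
      rw [Basis.det_apply, ← h2, ← hdet, h1, Matrix.det_mul, Matrix.det_conjTranspose, star_trivial]
      ring
    have h4 : |o.toBasis.det B| = 1 := by
      rcases sq_eq_sq_iff_eq_or_eq_neg.mp (h3.trans (one_pow 2).symm) with h | h <;> simp [h]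
    rw [h4, ENNReal.ofReal_one]
  have : Nontrivial V := Module.nontrivial_of_finrank_pos (R := ℝ) (by omega)
  have hle : MeasureTheory.volume (Metric.ball (0 : V) (√2)) ≤
      3 * MeasureTheory.volume (ZSpan.fundamentalDomain B) := by
    have hc : Countable (Submodule.span ℤ (Set.range B)) := inferInstance
    have hc' : Countable (Submodule.span ℤ (Set.range B)).toAddSubgroup := hc
    refine measure_le_three
      (L := (Submodule.span ℤ (Set.range B)).toAddSubgroup)
      (ZSpan.isAddFundamentalDomain' B MeasureTheory.volume) measurableSet_ball ?_
    intro x t ht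
    by_contra! hcard
    obtain ⟨u, hu, hu4⟩ := Finset.exists_subset_card_eq (show 4 ≤ t.card by omega)
    let e := (Finset.equivFinOfCardEq hu4).symm
    let p : Fin 4 → V := fun i => ((e i : _) : (Submodule.span ℤ (Set.range B)).toAddSubgroup)
    have hp : ∀ i, p i ∈ M := fun i => by
      have := ((e i : _) : (Submodule.span ℤ (Set.range B)).toAddSubgroup).2
      rw [← hBM]; exact this
    have hinj : Function.Injective p := fun i j h => by
      exact e.injective (Subtype.ext (Subtype.ext h))
    have hclose : ∀ i, ⟪x - p i, x - p i⟫ < 2 := fun i => by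
      have h1 := ht _ (hu (e i).2)
      rw [Set.mem_vadd_set] at h1
      obtain ⟨y, hy, hxy⟩ := h1
      have h2 : x - p i = y := by
        rw [← hxy]; exact add_sub_cancel_left (p i) y
      rw [h2, real_inner_self_eq_norm_sq]
      rw [mem_ball_zero_iff] at hy
      rwa [Real.lt_sqrt (norm_nonneg _)] at hy
    have hfar : ∀ i j, i ≠ j → 6 ≤ ⟪(x - p i) - (x - p j), (x - p i) - (x - p j)⟫ := by
      intro i j hij
      rw [sub_sub_sub_cancel_left]
      exact hcon _ (M.sub_mem (hp j) (hp i)) (sub_ne_zero.mpr fun h => hij (hinj h.symm))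
    exact four_points (hclose 0) (hclose 1) (hclose 2) (hclose 3)
      (hfar 0 1 (by decide)) (hfar 0 2 (by decide)) (hfar 0 3 (by decide))
      (hfar 1 2 (by decide)) (hfar 1 3 (by decide)) (hfar 2 3 (by decide))
  rw [hvol, mul_one, InnerProductSpace.volume_ball_of_dim_even (k := 12) (by rw [hdim]), hdim,
    ← ENNReal.ofReal_pow (Real.sqrt_nonneg _), ← ENNReal.ofReal_mul (by positivity)] at hle
  have h24 : (√2 : ℝ) ^ 24 = 4096 := by
    rw [show (24 : ℕ) = 2 * 12 from rfl, pow_mul, Real.sq_sqrt (by norm_num)]; norm_num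
  rw [h24, show (3 : ENNReal) = ENNReal.ofReal 3 by simp,
    ENNReal.ofReal_le_ofReal_iff (by norm_num)] at hle
  have hpi : (3 : ℝ) ^ 12 ≤ Real.pi ^ 12 :=
    pow_le_pow_left₀ (by norm_num) Real.pi_gt_three.le 12
  have hf : ((12 : ℕ).factorial : ℝ) = 479001600 := by norm_num [Nat.factorial]
  rw [hf] at hle
  norm_num at hpi hle
  linarith

/-- An even unimodular lattice of rank 24 without vectors of norm `2` has minimum `4`. -/
theorem minNorm_eq_four [FiniteDimensional ℝ V] (hdim : finrank ℝ V = 24)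
    (M : Submodule ℤ V) (hM : IsLat M ∧ IsEvenLat M ∧ IsUnimodularLat M)
    (h : ∀ x ∈ M, x ≠ 0 → 2 < ⟪x, x⟫) : minNorm M = 4 := by
  obtain ⟨x, hx, hx0, hx6⟩ := exists_short hdim M hM.1 hM.2.2
  have key : ∀ y ∈ M, y ≠ 0 → 4 ≤ ⟪y, y⟫ := by
    intro y hy hy0
    obtain ⟨k, hk⟩ := hM.2.1.2 y hy
    have h1 := h y hy hy0
    rw [hk] at h1 ⊢
    have h2 : 1 < k := by
      have : (1 : ℝ) < k := by linarith
      exact_mod_cast this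
    have h3 : (2 : ℝ) ≤ k := by exact_mod_cast h2
    linarith
  have hx4 : ⟪x, x⟫ = 4 := by
    obtain ⟨k, hk⟩ := hM.2.1.2 x hx
    have h1 := key x hx hx0
    rw [hk] at h1 hx6 ⊢
    have h2 : 2 ≤ k := by
      have : (2 : ℝ) ≤ k := by linarith
      exact_mod_cast this
    have h3 : k < 3 := by
      have : (k : ℝ) < 3 := by linarith
      exact_mod_cast this
    have : k = 2 := by omega
    rw [this]; norm_num
  refine IsLeast.csInf_eq ⟨⟨x, hx, hx0, hx4⟩, ?_⟩
  rintro r ⟨y, hy, hy0, rfl⟩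
  exact key y hy hy0

/-- if `μ(L(M,N,3)) = 8` then both `M` and `N` are Leech lattices, i.e.
`μ(M) = μ(N) = 4`. -/
theorem statement11 [FiniteDimensional ℝ V] (hdim : finrank ℝ V = 24)
    (Υ M N : Submodule ℤ V) (hΥlat : IsLat Υ) (hΥ : SqrtTwoEvenUnimod Υ)
    (hpol : IsPolarization Υ M N)
    (hM : IsLat M ∧ IsEvenLat M ∧ IsUnimodularLat M)
    (hN : IsLat N ∧ IsEvenLat N ∧ IsUnimodularLat N)
    (h8 : minNorm (LMN M N 3) = 8) :
    minNorm M = 4 ∧ minNorm N = 4 := by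
  have hmin : ∀ v ∈ LMN M N 3, v ≠ 0 → 8 ≤ ⟪v, v⟫ := by
    intro v hv hv0
    rw [← h8]
    refine csInf_le ⟨0, ?_⟩ ⟨v, hv, hv0, rfl⟩
    rintro r ⟨y, _, _, rfl⟩
    exact real_inner_self_nonneg
  refine ⟨minNorm_eq_four hdim M hM ?_, minNorm_eq_four hdim N hN ?_⟩
  · intro x hx hx0
    have h := hmin (WithLp.toLp 2 ![x, -x, 0]) ?_ ?_
    · rw [PiLp.inner_apply, Fin.sum_univ_three] at h
      simp at h
      simp only [real_inner_self_eq_norm_sq]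
      linarith
    · refine Submodule.mem_sup_left ⟨?_, ?_⟩
      · intro i
        fin_cases i
        · exact hx
        · exact M.neg_mem hx
        · exact M.zero_mem
      · rw [Fin.sum_univ_three]
        simp
    · intro h0
      exact hx0 (congrArg (fun v : PiLp 2 (fun _ : Fin 3 => V) => v 0) h0)
  · intro y hy hy0
    have h := hmin (WithLp.toLp 2 fun _ => y) ?_ ?_
    · rw [PiLp.inner_apply, Fin.sum_univ_three] at h
      simp at h
      simp only [real_inner_self_eq_norm_sq]
      linarith
    · exact Submodule.mem_sup_right ⟨y, hy, fun i => rfl⟩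
    · intro h0
      exact hy0 (congrArg (fun v : PiLp 2 (fun _ : Fin 3 => V) => v 0) h0)
end
end

section
/- In the Leech polarization setup, let (w,x,y,z) be an offender and let K be the ℤ-span of {w,x,y,z} in V. Then: (i) w ∉ M and the image of K in Υ/M has order 2; and (ii) K is an even integral lattice, i.e. ⟪u,v⟫ ∈ ℤ for all u,v ∈ K and ⟪u,u⟫ ∈ 2ℤ for all u ∈ K (in particular ⟪w,x⟫, ⟪w,y⟫, ⟪w,z⟫ ∈ ℤ). -/
noncomputable section

open scoped RealInnerProductSpace Pointwise
open Module

variable {V : Type*} [NormedAddCommGroup V] [InnerProductSpace ℝ V]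

/-- for an offender `(w,x,y,z)` with `K = spanℤ{w,x,y,z}`:
(i) `w ∉ M` and the image of `K` in `V/M` has order 2; (ii) `K` is an even integral
lattice. -/
theorem statement12 (Υ M N : Submodule ℤ V) (h : LeechSetup Υ M N)
    (w x y z : V) (hoff : Offender M N w x y z) :
    (w ∉ M ∧
      Nat.card ((Submodule.span ℤ ({w, x, y, z} : Set V)).map M.mkQ) = 2) ∧
    ((∀ u ∈ Submodule.span ℤ ({w, x, y, z} : Set V),
        ∀ v ∈ Submodule.span ℤ ({w, x, y, z} : Set V), ∃ n : ℤ, ⟪u, v⟫ = (n : ℝ)) ∧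
      ∀ u ∈ Submodule.span ℤ ({w, x, y, z} : Set V), ∃ n : ℤ, ⟪u, u⟫ = 2 * (n : ℝ)) := by
  obtain ⟨-, -, -, -, ⟨-, hNU, -, -, -, hMN⟩, -, hM, -, hmin, -, hN, -, -⟩ := h
  obtain ⟨⟨hw, hx, hy, hz, -⟩, h1, h2, h3⟩ := hoff
  have hwM : w ∉ M := by
    intro hwM
    have hle : minNorm M ≤ 2 := by
      apply csInf_le
      · refine ⟨0, ?_⟩
        rintro r ⟨v, -, -, rfl⟩
        exact real_inner_self_nonneg
      · refine ⟨w + x, M.add_mem hwM hx, ?_, h1⟩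
        intro h0
        rw [h0, inner_zero_left] at h1
        norm_num at h1
    rw [hmin] at hle
    norm_num at hle
  have h2w : (2 : ℤ) • w ∈ M := by
    have : (2 : ℤ) • w ∈ M ⊓ N := by
      rw [hMN]
      exact Submodule.smul_mem_pointwise_smul w 2 Υ (hNU hw)
    exact this.1
  obtain ⟨k, hk⟩ := hN.2 w hw
  have key : ∀ v ∈ M, ⟪w + v, w + v⟫ = 2 → ∃ n : ℤ, ⟪w, v⟫ = (n : ℝ) := by
    intro v hv h
    obtain ⟨l, hl⟩ := hM.2 v hv
    rw [real_inner_add_add_self] at h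
    refine ⟨1 - k - l, ?_⟩
    push_cast
    linarith
  have hspan : ∀ m ∈ Submodule.span ℤ ({x, y, z} : Set V),
      m ∈ M ∧ ∃ n : ℤ, ⟪w, m⟫ = (n : ℝ) := by
    intro m hm
    induction hm using Submodule.span_induction with
    | mem v hv =>
      simp only [Set.mem_insert_iff, Set.mem_singleton_iff] at hv
      rcases hv with rfl | rfl | rfl
      · exact ⟨hx, key _ hx h1⟩
      · exact ⟨hy, key _ hy h2⟩
      · exact ⟨hz, key _ hz h3⟩
    | zero => exact ⟨M.zero_mem, 0, by simp⟩
    | add a b _ _ ha hb =>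
      obtain ⟨ha, p, hp⟩ := ha
      obtain ⟨hb, q, hq⟩ := hb
      exact ⟨M.add_mem ha hb, p + q, by rw [inner_add_right, hp, hq]; push_cast; rfl⟩
    | smul c a _ ha =>
      obtain ⟨ha, p, hp⟩ := ha
      refine ⟨M.smul_mem c ha, c * p, ?_⟩
      rw [← Int.cast_smul_eq_zsmul ℝ, real_inner_smul_right, hp]
      push_cast; rfl
  have hdec : ∀ u ∈ Submodule.span ℤ ({w, x, y, z} : Set V),
      ∃ (a : ℤ) (m : V), u = (a : ℝ) • w + m ∧ m ∈ M ∧ ∃ n : ℤ, ⟪w, m⟫ = (n : ℝ) := by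
    intro u hu
    obtain ⟨a, m, hm, rfl⟩ := Submodule.mem_span_insert.1 hu
    exact ⟨a, m, by rw [Int.cast_smul_eq_zsmul], hspan m hm⟩
  refine ⟨⟨hwM, ?_⟩, ?_, ?_⟩
  · have hset : (((Submodule.span ℤ ({w, x, y, z} : Set V)).map M.mkQ : Submodule ℤ (V ⧸ M)) :
        Set (V ⧸ M)) = {0, M.mkQ w} := by
      ext q
      simp only [SetLike.mem_coe, Submodule.mem_map, Set.mem_insert_iff, Set.mem_singleton_iff]
      constructor
      · rintro ⟨u, hu, rfl⟩
        obtain ⟨a, m, rfl, hm, -⟩ := hdec u hu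
        rw [Int.cast_smul_eq_zsmul]
        have hm0 : M.mkQ m = 0 := by simpa using hm
        have h20 : (2 : ℤ) • M.mkQ w = 0 := by
          rw [← map_zsmul]
          exact (Submodule.Quotient.mk_eq_zero M).2 h2w
        rw [map_add, hm0, add_zero, map_zsmul]
        rcases Int.even_or_odd' a with ⟨b, rfl | rfl⟩
        · left
          rw [mul_comm, mul_smul, h20, smul_zero]
        · right
          rw [add_smul, mul_comm, mul_smul, h20, smul_zero, one_smul, zero_add]
      · rintro (rfl | rfl)
        · exact ⟨0, Submodule.zero_mem _, map_zero _⟩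
        · exact ⟨w, Submodule.subset_span (by simp), rfl⟩
    have hne : (0 : V ⧸ M) ≠ M.mkQ w := by
      intro h0
      apply hwM
      simpa using h0.symm
    have := Set.ncard_pair hne
    rw [← hset] at this
    exact this
  · intro u hu v hv
    obtain ⟨a, m, rfl, hm, p, hp⟩ := hdec u hu
    obtain ⟨b, n, rfl, hn, q, hq⟩ := hdec v hv
    obtain ⟨r, hr⟩ := hM.1 m hm n hn
    refine ⟨a * b * (2 * k) + a * q + b * p + r, ?_⟩
    simp only [inner_add_left, inner_add_right, real_inner_smul_left, real_inner_smul_right]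
    rw [real_inner_comm w m, hk, hp, hq, hr]
    push_cast
    ring
  · intro u hu
    obtain ⟨a, m, rfl, hm, p, hp⟩ := hdec u hu
    obtain ⟨r, hr⟩ := hM.2 m hm
    refine ⟨a * a * k + a * p + r, ?_⟩
    simp only [inner_add_left, inner_add_right, real_inner_smul_left, real_inner_smul_right]
    rw [real_inner_comm w m, hk, hp, hr]
    push_cast
    ring
end
end

section
/- In the Leech polarization setup, let (w,x,y,z) be an offender. Then the three roots w+x, w+y, w+z are pairwise orthogonal: ⟪w+x, w+y⟫ = ⟪w+x, w+z⟫ = ⟪w+y, w+z⟫ = 0. -/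
noncomputable section

open scoped RealInnerProductSpace Pointwise
open Module

variable {V : Type*} [NormedAddCommGroup V] [InnerProductSpace ℝ V]

/-- Nonzero vectors of a lattice of minimum norm `4` have norm at least `4`. -/
theorem four_le_of_minNorm {L : Submodule ℤ V} (hL : minNorm L = 4) {v : V} (hv : v ∈ L)
    (h0 : v ≠ 0) : 4 ≤ ⟪v, v⟫ := by
  rw [← hL]
  refine csInf_le ⟨0, ?_⟩ ⟨v, hv, h0, rfl⟩
  rintro r ⟨u, -, -, rfl⟩
  exact real_inner_self_nonneg

/-- Two of the roots of an offender are orthogonal. -/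
theorem offender_pair (Υ M N : Submodule ℤ V) (h : LeechSetup Υ M N)
    (w x y z : V) (hoff : Offender M N w x y z) : ⟪w + x, w + y⟫ = 0 := by
  obtain ⟨-, -, -, -, ⟨hMU, hNU, -, -, -, hMN⟩, -, -, -, hM, -, -, -, hN⟩ := h
  obtain ⟨⟨hw, hx, hy, hz, hs⟩, ha, hb, hc⟩ := hoff
  have two : ∀ v ∈ Υ, v + v ∈ M ⊓ N := by
    intro v hv
    rw [hMN, ← two_zsmul]
    exact Submodule.smul_mem_pointwise_smul v 2 Υ hv
  -- the sum `x + y` does not lie in `M ∩ N`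
  have key : x + y ∉ M ⊓ N := by
    intro hxy
    have hzN : z ∈ N := by
      have := (M ⊓ N).sub_mem hs hxy
      rw [add_sub_cancel_left] at this
      exact this.2
    have hne : w + z ≠ 0 := by
      intro h0
      rw [h0, inner_zero_left] at hc
      norm_num at hc
    have := four_le_of_minNorm hN (N.add_mem hw hzN) hne
    linarith
  have hcomm := real_inner_comm (w + x) (w + y)
  have hle : ⟪w + x, w + y⟫ ≤ 0 := by
    have hmem : (w + x) - (w + y) ∈ M := by
      rw [add_sub_add_left_eq_sub]
      exact M.sub_mem hx hy
    have hne : (w + x) - (w + y) ≠ 0 := by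
      intro h0
      have hxy : x = y := add_left_cancel (sub_eq_zero.mp h0)
      subst hxy
      exact key (two x (hMU hx))
    have := four_le_of_minNorm hM hmem hne
    rw [inner_sub_left, inner_sub_right, inner_sub_right] at this
    linarith
  have hge : 0 ≤ ⟪w + x, w + y⟫ := by
    have hEq : (w + x) + (w + y) = (w + w) + (x + y) := by abel
    have hmem : (w + x) + (w + y) ∈ M := by
      rw [hEq]
      exact M.add_mem (two w (hNU hw)).1 (M.add_mem hx hy)
    have hne : (w + x) + (w + y) ≠ 0 := by
      intro h0
      rw [hEq] at h0
      apply key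
      rw [← neg_eq_of_add_eq_zero_right h0]
      exact (M ⊓ N).neg_mem (two w (hNU hw))
    have := four_le_of_minNorm hM hmem hne
    rw [inner_add_left, inner_add_right (w + x) (w + x), inner_add_right (w + y) (w + x)] at this
    linarith
  exact le_antisymm hle hge

/-- the three roots `w+x, w+y, w+z` of an offender are pairwise
orthogonal. -/
theorem statement13 (Υ M N : Submodule ℤ V) (h : LeechSetup Υ M N)
    (w x y z : V) (hoff : Offender M N w x y z) :
    ⟪w + x, w + y⟫ = 0 ∧ ⟪w + x, w + z⟫ = 0 ∧ ⟪w + y, w + z⟫ = 0 := by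
  refine ⟨offender_pair Υ M N h w x y z hoff, offender_pair Υ M N h w x z y ?_,
    offender_pair Υ M N h w y z x ?_⟩
  · obtain ⟨⟨hw, hx, hy, hz, hs⟩, ha, hb, hc⟩ := hoff
    exact ⟨⟨hw, hx, hz, hy, by rwa [add_right_comm]⟩, ha, hc, hb⟩
  · obtain ⟨⟨hw, hx, hy, hz, hs⟩, ha, hb, hc⟩ := hoff
    exact ⟨⟨hw, hy, hz, hx, by rwa [add_comm, ← add_assoc]⟩, hb, hc, ha⟩
end
end

section
/- In the Leech polarization setup, let (w,x,y,z) be an offender with ⟪w,w⟫ = 4, and set r = w+x, s = w+y, t = w+z. Then exactly two of the inner products ⟪w,r⟫, ⟪w,s⟫, ⟪w,t⟫ are 0 and the remaining one is 1 or −1; consequently the unordered multiset of norms {⟪x,x⟫, ⟪y,y⟫, ⟪z,z⟫} is {6,6,4} or {6,6,8}. -/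
noncomputable section

open scoped RealInnerProductSpace Pointwise
open Module

variable {V : Type*} [NormedAddCommGroup V] [InnerProductSpace ℝ V]

lemma le_of_minNorm {L : Submodule ℤ V} (h : minNorm L = 4) (v : V) (hv : v ∈ L) (h0 : v ≠ 0) :
    4 ≤ ⟪v, v⟫ := by
  rw [← h]
  apply csInf_le
  · refine ⟨0, ?_⟩
    rintro r ⟨x, _, _, rfl⟩
    exact real_inner_self_nonneg
  · exact ⟨v, hv, h0, rfl⟩

lemma orth_of_mem {M : Submodule ℤ V} (h : ∀ v ∈ M, v ≠ 0 → 4 ≤ ⟪v, v⟫) (p q : V)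
    (hp : ⟪p, p⟫ = 2) (hq : ⟪q, q⟫ = 2) (ha : p + q ∈ M) (hs : p - q ∈ M)
    (h1 : p + q ≠ 0) (h2 : p - q ≠ 0) : ⟪p, q⟫ = 0 := by
  have e1 := h _ ha h1
  have e2 := h _ hs h2
  rw [real_inner_add_add_self] at e1
  rw [real_inner_sub_sub_self] at e2
  linarith

lemma small_of_mem {M : Submodule ℤ V} (h : ∀ v ∈ M, v ≠ 0 → 4 ≤ ⟪v, v⟫)
    (hE : IsEvenLat M) (w r : V) (hw : ⟪w, w⟫ = 4) (hr : ⟪r, r⟫ = 2)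
    (ha : r + w ∈ M) (hs : r - w ∈ M) :
    ∃ n : ℤ, ⟪w, r⟫ = n ∧ -1 ≤ n ∧ n ≤ 1 := by
  have h1 : r + w ≠ 0 := by
    intro h0
    have : r = -w := eq_neg_of_add_eq_zero_left h0
    rw [this, inner_neg_neg] at hr
    linarith
  have h2 : r - w ≠ 0 := by
    intro h0
    rw [sub_eq_zero.1 h0] at hr
    linarith
  have e1 := h _ ha h1
  have e2 := h _ hs h2
  obtain ⟨n, hn⟩ := hE.2 _ hs
  rw [real_inner_add_add_self, real_inner_comm w r] at e1
  rw [real_inner_sub_sub_self, real_inner_comm w r] at e2 hn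
  have e : ⟪w, r⟫ = ((3 - n : ℤ) : ℝ) := by push_cast; linarith
  refine ⟨3 - n, e, ?_, ?_⟩
  · have : (-1 : ℝ) ≤ ((3 - n : ℤ) : ℝ) := by rw [← e]; linarith
    exact_mod_cast this
  · have : ((3 - n : ℤ) : ℝ) ≤ 1 := by rw [← e]; linarith
    exact_mod_cast this

set_option maxHeartbeats 1600000 in
/-- for an offender with `⟪w,w⟫ = 4`, exactly two of
`⟪w,w+x⟫, ⟪w,w+y⟫, ⟪w,w+z⟫` vanish and the third is `±1`; consequently the multiset of
norms `{⟪x,x⟫, ⟪y,y⟫, ⟪z,z⟫}` is `{6,6,4}` or `{6,6,8}`. -/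
theorem statement14 (Υ M N : Submodule ℤ V) (h : LeechSetup Υ M N)
    (w x y z : V) (hoff : Offender M N w x y z) (hw : ⟪w, w⟫ = 4) :
    (({⟪w, w + x⟫, ⟪w, w + y⟫, ⟪w, w + z⟫} : Multiset ℝ) = ({0, 0, 1} : Multiset ℝ) ∨
      ({⟪w, w + x⟫, ⟪w, w + y⟫, ⟪w, w + z⟫} : Multiset ℝ) = ({0, 0, -1} : Multiset ℝ)) ∧
    (({⟪x, x⟫, ⟪y, y⟫, ⟪z, z⟫} : Multiset ℝ) = ({6, 6, 4} : Multiset ℝ) ∨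
      ({⟪x, x⟫, ⟪y, y⟫, ⟪z, z⟫} : Multiset ℝ) = ({6, 6, 8} : Multiset ℝ)) := by
  obtain ⟨-, -, ⟨hU1, -, -⟩, hU4, ⟨hMU, hNU, -, -, -, hMN⟩, -, hME, -, hM4, -, hNE, -, hN4⟩ := h
  obtain ⟨⟨hwN, hxM, hyM, hzM, hsum⟩, hr, hs, ht⟩ := hoff
  have hM := le_of_minNorm hM4
  have hN := le_of_minNorm hN4
  have two : ∀ v ∈ Υ, v + v ∈ M ⊓ N := by
    intro v hv
    rw [hMN, ← two_zsmul]
    exact Submodule.smul_mem_pointwise_smul _ _ _ hv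
  have hxx : ⟪x, x⟫ = 6 - 2 * ⟪w, w + x⟫ := by
    rw [real_inner_add_add_self] at hr; rw [inner_add_right]; linarith
  have hyy : ⟪y, y⟫ = 6 - 2 * ⟪w, w + y⟫ := by
    rw [real_inner_add_add_self] at hs; rw [inner_add_right]; linarith
  have hzz : ⟪z, z⟫ = 6 - 2 * ⟪w, w + z⟫ := by
    rw [real_inner_add_add_self] at ht; rw [inner_add_right]; linarith
  obtain ⟨r, rfl⟩ : ∃ r, x = r - w := ⟨x + w, by abel⟩
  obtain ⟨s, rfl⟩ : ∃ r, y = r - w := ⟨y + w, by abel⟩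
  obtain ⟨t, rfl⟩ : ∃ r, z = r - w := ⟨z + w, by abel⟩
  simp only [add_sub_cancel] at *
  have hwU := hNU hwN
  have hw2 := two w hwU
  have hrU : r ∈ Υ := by simpa using Υ.add_mem (hMU hxM) hwU
  have hsU : s ∈ Υ := by simpa using Υ.add_mem (hMU hyM) hwU
  have htU : t ∈ Υ := by simpa using Υ.add_mem (hMU hzM) hwU
  -- w - (r+s+t) ∈ 2Υ
  have hD : w - (r + s + t) ∈ M ⊓ N := by
    have := (M ⊓ N).neg_mem ((M ⊓ N).add_mem hsum hw2)
    convert this using 1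
    abel
  have hrN : r + s + t ∈ N := by
    have := N.sub_mem hwN hD.2
    simpa using this
  have addM : ∀ p q : V, p - w ∈ M → q - w ∈ M → p + q ∈ M ∧ p - q ∈ M := by
    intro p q hp hq
    constructor
    · convert M.add_mem (M.add_mem hp hq) hw2.1 using 1; abel
    · convert M.sub_mem hp hq using 1; abel
  have key : ∀ p q u : V, p ∈ Υ → q ∈ Υ → ⟪p, p⟫ = 2 → ⟪q, q⟫ = 2 → ⟪u, u⟫ = 2 →
      p - w ∈ M → q - w ∈ M → p + q + u ∈ N → ⟪p, q⟫ = 0 := by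
    intro p q u hpU hqU hp hq hu hpM hqM hN3
    obtain ⟨ha, hb⟩ := addM p q hpM hqM
    have hu0 : u ≠ 0 := by rintro rfl; simp at hu
    have huN : u ∉ N := fun h' => by have := hN u h' hu0; linarith
    refine orth_of_mem hM p q hp hq ha hb ?_ ?_
    · intro h0
      rw [h0, zero_add] at hN3
      exact huN hN3
    · intro h0
      rw [sub_eq_zero.1 h0] at hN3
      have := N.sub_mem hN3 (two q hqU).2
      exact huN (by simpa using this)
  have hrs : ⟪r, s⟫ = 0 := key r s t hrU hsU hr hs ht hxM hyM hrN
  have hrt : ⟪r, t⟫ = 0 := key r t s hrU htU hr ht hs hxM hzM (by convert hrN using 1; abel)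
  have hst : ⟪s, t⟫ = 0 := key s t r hsU htU hs ht hr hyM hzM (by convert hrN using 1; abel)
  obtain ⟨a, ha, ha1, ha2⟩ := small_of_mem hM hME w r hw hr
    (by convert M.add_mem hxM hw2.1 using 1; abel) hxM
  obtain ⟨b, hb, hb1, hb2⟩ := small_of_mem hM hME w s hw hs
    (by convert M.add_mem hyM hw2.1 using 1; abel) hyM
  obtain ⟨c, hc, hc1, hc2⟩ := small_of_mem hM hME w t hw ht
    (by convert M.add_mem hzM hw2.1 using 1; abel) hzM
  have sg : ∀ p q u : V, ⟪p, p⟫ = 2 → ⟪q, q⟫ = 2 → ⟪u, u⟫ = 2 → ⟪p, q⟫ = 0 → ⟪p, u⟫ = 0 →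
      ⟪q, u⟫ = 0 → w - (p + q + u) ∈ M ⊓ N →
      ∃ k : ℤ, 2 ≤ k ∧ ⟪w, p⟫ + ⟪w, q⟫ + ⟪w, u⟫ = ((5 - 2 * k : ℤ) : ℝ) := by
    intro p q u hp hq hu hpq hpu hqu hm
    rw [hMN] at hm
    obtain ⟨v, hv, hv2⟩ := (Submodule.mem_smul_pointwise_iff_exists _ _ _).1 hm
    obtain ⟨k, hk⟩ := hU1 v hv
    have hn3 : ⟪p + q + u, p + q + u⟫ = 6 := by
      rw [real_inner_add_add_self, real_inner_add_add_self, inner_add_left]; linarith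
    have hv0 : v ≠ 0 := by
      rintro rfl
      rw [smul_zero] at hv2
      rw [← sub_eq_zero.1 hv2.symm] at hn3
      linarith
    have h4 := hU4 v hv hv0
    have hk2 : (2 : ℝ) ≤ k := by rw [← hk]; linarith
    refine ⟨k, by exact_mod_cast hk2, ?_⟩
    have e : ⟪w - (p + q + u), w - (p + q + u)⟫ = 4 * k := by
      rw [← hv2, two_zsmul, real_inner_add_add_self]; linarith
    rw [real_inner_sub_sub_self, inner_add_right, inner_add_right] at e
    push_cast
    linarith
  have mem2 : ∀ p q : V, p ∈ M ⊓ N → q ∈ Υ → p + (q + q) ∈ M ⊓ N :=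
    fun p q hp hq => (M ⊓ N).add_mem hp (two q hq)
  have D : ∀ e1 e2 e3 : ℤ, (e1 = 1 ∨ e1 = -1) → (e2 = 1 ∨ e2 = -1) → (e3 = 1 ∨ e3 = -1) →
      ∃ k : ℤ, 2 ≤ k ∧ e1 * a + e2 * b + e3 * c = 5 - 2 * k := by
    intro e1 e2 e3 h1 h2 h3
    have hm : w - (e1 • r + e2 • s + e3 • t) ∈ M ⊓ N := by
      have aux : ∀ (e : ℤ) (p : V), (e = 1 ∨ e = -1) → p ∈ Υ → p - e • p ∈ M ⊓ N := by
        rintro e p (rfl | rfl) hp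
        · simp
        · simpa using two p hp
      have := (M ⊓ N).add_mem (((M ⊓ N).add_mem ((M ⊓ N).add_mem hD (aux e1 r h1 hrU))
        (aux e2 s h2 hsU))) (aux e3 t h3 htU)
      convert this using 1
      abel
    have nn : ∀ (e : ℤ) (p : V), (e = 1 ∨ e = -1) → ⟪p, p⟫ = 2 → ⟪e • p, e • p⟫ = 2 := by
      rintro e p (rfl | rfl) hp <;> simpa using hp
    have oo : ∀ (e e' : ℤ) (p q : V), (e = 1 ∨ e = -1) → (e' = 1 ∨ e' = -1) → ⟪p, q⟫ = 0 →
        ⟪e • p, e' • q⟫ = 0 := by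
      rintro e e' p q (rfl | rfl) (rfl | rfl) hp <;> simpa using hp
    have ss : ∀ (e : ℤ) (p : V), (e = 1 ∨ e = -1) → ⟪w, e • p⟫ = e * ⟪w, p⟫ := by
      rintro e p (rfl | rfl) <;> simp
    obtain ⟨k, hk, he⟩ := sg _ _ _ (nn e1 r h1 hr) (nn e2 s h2 hs) (nn e3 t h3 ht)
      (oo e1 e2 r s h1 h2 hrs) (oo e1 e3 r t h1 h3 hrt) (oo e2 e3 s t h2 h3 hst) hm
    rw [ss _ _ h1, ss _ _ h2, ss _ _ h3, ha, hb, hc] at he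
    exact ⟨k, hk, by exact_mod_cast he⟩
  obtain ⟨k1, _, _⟩ := D 1 1 1 (by simp) (by simp) (by simp)
  obtain ⟨k2, _, _⟩ := D 1 1 (-1) (by simp) (by simp) (by simp)
  obtain ⟨k3, _, _⟩ := D 1 (-1) 1 (by simp) (by simp) (by simp)
  obtain ⟨k4, _, _⟩ := D 1 (-1) (-1) (by simp) (by simp) (by simp)
  obtain ⟨k5, _, _⟩ := D (-1) 1 1 (by simp) (by simp) (by simp)
  obtain ⟨k6, _, _⟩ := D (-1) 1 (-1) (by simp) (by simp) (by simp)
  obtain ⟨k7, _, _⟩ := D (-1) (-1) 1 (by simp) (by simp) (by simp)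
  obtain ⟨k8, _, _⟩ := D (-1) (-1) (-1) (by simp) (by simp) (by simp)
  have fin : (a = 0 ∧ b = 0 ∧ (c = 1 ∨ c = -1)) ∨ (a = 0 ∧ c = 0 ∧ (b = 1 ∨ b = -1)) ∨
      (b = 0 ∧ c = 0 ∧ (a = 1 ∨ a = -1)) := by omega
  have p1 : ∀ u v : ℝ, ({u, v, u} : Multiset ℝ) = {u, u, v} := fun u v => by
    simp only [Multiset.insert_eq_cons, Multiset.pair_comm v u]
  have p2 : ∀ u v : ℝ, ({v, u, u} : Multiset ℝ) = {u, u, v} := fun u v => by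
    rw [← p1]
    simp only [Multiset.insert_eq_cons]
    exact Multiset.cons_swap _ _ _
  rw [hxx, hyy, hzz, ha, hb, hc]
  have q1 : (6 : ℝ) - 2 * 0 = 6 := by norm_num
  have q2 : (6 : ℝ) - 2 * 1 = 4 := by norm_num
  have q3 : (6 : ℝ) - 2 * (-1) = 8 := by norm_num
  rcases fin with ⟨rfl, rfl, rfl | rfl⟩ | ⟨rfl, rfl, rfl | rfl⟩ | ⟨rfl, rfl, rfl | rfl⟩ <;>
    simp only [Int.cast_zero, Int.cast_one, Int.cast_neg, q1, q2, q3, p1 0 1, p1 0 (-1), p1 6 4,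
      p1 6 8, p2 0 1, p2 0 (-1), p2 6 4, p2 6 8, true_or, or_true,
      and_self]
end
end

section
/- In the Leech polarization setup, if there exists an offender (w,x,y,z) with ⟪w,w⟫ = 4, then there exists a super offender, i.e. an offender (w',x',y',z') with ⟪w',w'⟫ = 4 whose multiset of norms {⟪x',x'⟫, ⟪y',y'⟫, ⟪z',z'⟫} equals {6,6,4}. -/
noncomputable section

open scoped RealInnerProductSpace Pointwise
open Module

variable {V : Type*} [NormedAddCommGroup V] [InnerProductSpace ℝ V]

theorem aux_minNorm (M : Submodule ℤ V) (h : minNorm M = 4) (x : V) (hx : x ∈ M) (h0 : x ≠ 0) :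
    4 ≤ ⟪x, x⟫ := by
  rw [← h]
  apply csInf_le
  · refine ⟨0, ?_⟩
    rintro r ⟨y, _, _, rfl⟩
    exact real_inner_self_nonneg
  · exact ⟨x, hx, h0, rfl⟩

/-- inner products of a norm two vector `a` with a norm four vector `v`, when `a - v ∈ M`
and `2 v ∈ M`. -/
theorem aux_pair (M : Submodule ℤ V) (hev : IsEvenLat M) (hmin : minNorm M = 4)
    (a v : V) (ha : ⟪a, a⟫ = 2) (hv : ⟪v, v⟫ = 4) (h1 : a - v ∈ M) (h2 : a + v ∈ M) :
    ∃ n : ℤ, ⟪a, v⟫ = n ∧ -1 ≤ n ∧ n ≤ 1 := by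
  obtain ⟨n, hn⟩ := hev.2 _ h1
  have e1 : ⟪a - v, a - v⟫ = 6 - 2 * ⟪a, v⟫ := by
    rw [real_inner_sub_sub_self]; linarith
  have e2 : ⟪a + v, a + v⟫ = 6 + 2 * ⟪a, v⟫ := by
    rw [real_inner_add_add_self]; linarith
  have n1 : a - v ≠ 0 := by
    intro h
    rw [sub_eq_zero] at h
    rw [h] at ha; linarith
  have n2 : a + v ≠ 0 := by
    intro h
    rw [add_eq_zero_iff_eq_neg] at h
    rw [h, inner_neg_neg] at ha; linarith
  have m1 := aux_minNorm M hmin _ h1 n1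
  have m2 := aux_minNorm M hmin _ h2 n2
  have e : ⟪a, v⟫ = ((3 - n : ℤ) : ℝ) := by push_cast; linarith
  refine ⟨3 - n, e, ?_, ?_⟩
  · have : (-1 : ℝ) ≤ ((3 - n : ℤ) : ℝ) := by rw [← e]; linarith
    exact_mod_cast this
  · have : ((3 - n : ℤ) : ℝ) ≤ (1 : ℝ) := by rw [← e]; linarith
    exact_mod_cast this

theorem aux_norm3 (a b c : V) :
    ⟪a + b + c, a + b + c⟫ = ⟪a, a⟫ + ⟪b, b⟫ + ⟪c, c⟫ + 2 * (⟪a, b⟫ + ⟪b, c⟫ + ⟪a, c⟫) := by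
  simp only [inner_add_left, inner_add_right, real_inner_comm a b, real_inner_comm b c,
    real_inner_comm a c]
  ring

/-- The three norm two vectors are pairwise orthogonal: sign-normalised contradictions. -/
theorem aux_excl (M D : Submodule ℤ V) (hev : IsEvenLat M) (hmin : minNorm M = 4)
    (hDM : D ≤ M) (hD : ∀ d ∈ D, d = 0 ∨ 8 ≤ ⟪d, d⟫)
    (w : V) (hw : ⟪w, w⟫ = 4) (hw2 : (2 : ℤ) • w ∈ D) (a b c : V)
    (ha : ⟪a, a⟫ = 2) (hb : ⟪b, b⟫ = 2) (hc : ⟪c, c⟫ = 2)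
    (hca : c - w ∈ M) (hs : a + b + c - w ∈ D) (p q r : ℤ)
    (hp : ⟪a, b⟫ = p) (hq : ⟪b, c⟫ = q) (hr : ⟪a, c⟫ = r)
    (h : p + q + r = -2 ∨ p + q + r = -3 ∨ (p + q + r = -1 ∧ q + r = 0)) : False := by
  have key : ⟪a + b + c, a + b + c⟫ = 6 + 2 * ((p + q + r : ℤ) : ℝ) := by
    rw [aux_norm3, ha, hb, hc, hp, hq, hr]; push_cast; ring
  have hs' : a + b + c + w ∈ D := by
    have := D.add_mem hs hw2
    convert this using 1
    module
  set v := a + b + c with hv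
  rcases h with h | h | ⟨h, h'⟩
  · rw [h] at key
    have e1 : ⟪v - w, v - w⟫ = 6 - 2 * ⟪v, w⟫ := by
      rw [real_inner_sub_sub_self]; push_cast at key; linarith
    have e2 : ⟪v + w, v + w⟫ = 6 + 2 * ⟪v, w⟫ := by
      rw [real_inner_add_add_self]; push_cast at key; linarith
    rcases hD _ hs with k | k
    · rw [sub_eq_zero] at k
      rw [k, hw] at key; norm_num at key
    · rcases hD _ hs' with k' | k'
      · rw [add_eq_zero_iff_eq_neg] at k'
        rw [k', inner_neg_neg, hw] at key; norm_num at key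
      · linarith
  · rw [h] at key
    norm_num at key
    rw [key, zero_add] at hs'
    rcases hD _ hs' with k | k
    · rw [k] at hw; simp at hw
    · linarith
  · rw [h] at key
    have hcv : ⟪c, v⟫ = 2 := by
      have : ((q + r : ℤ) : ℝ) = 0 := by rw [h']; simp
      push_cast at this
      rw [hv, inner_add_right, inner_add_right, real_inner_comm a c, real_inner_comm b c, hc, hq, hr]
      linarith
    have m1 : c - v ∈ M := by
      have := M.sub_mem hca (hDM hs)
      convert this using 1
      module
    have m2 : c + v ∈ M := by
      have := M.add_mem hca (hDM hs')
      convert this using 1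
      module
    obtain ⟨n, hn, _, hn1⟩ := aux_pair M hev hmin c v hc (by rw [key]; norm_num) m1 m2
    rw [hcv] at hn
    have : n = 2 := by exact_mod_cast hn.symm
    omega

/-- Core: pairwise orthogonality. -/
theorem aux_orth (M D : Submodule ℤ V) (hev : IsEvenLat M) (hmin : minNorm M = 4)
    (hDM : D ≤ M) (hD : ∀ d ∈ D, d = 0 ∨ 8 ≤ ⟪d, d⟫)
    (w : V) (hw : ⟪w, w⟫ = 4) (hw2 : (2 : ℤ) • w ∈ D) (a b c : V)
    (ha2 : (2 : ℤ) • a ∈ D) (hb2 : (2 : ℤ) • b ∈ D) (hc2 : (2 : ℤ) • c ∈ D)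
    (ha : ⟪a, a⟫ = 2) (hb : ⟪b, b⟫ = 2) (hc : ⟪c, c⟫ = 2)
    (haM : a - w ∈ M) (hbM : b - w ∈ M) (hcM : c - w ∈ M) (hs : a + b + c - w ∈ D) (p q r : ℤ)
    (hp : ⟪a, b⟫ = p) (hq : ⟪b, c⟫ = q) (hr : ⟪a, c⟫ = r)
    (hp1 : -1 ≤ p ∧ p ≤ 1) (hq1 : -1 ≤ q ∧ q ≤ 1) (hr1 : -1 ≤ r ∧ r ≤ 1) :
    p = 0 ∧ q = 0 ∧ r = 0 := by
  have hp' : ⟪b, a⟫ = p := by rw [real_inner_comm]; exact hp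
  have hq' : ⟪c, b⟫ = q := by rw [real_inner_comm]; exact hq
  have hr' : ⟪c, a⟫ = r := by rw [real_inner_comm]; exact hr
  -- sign patterns, for each choice of the distinguished vector
  have neg_mem : ∀ v : V, (2 : ℤ) • v ∈ D → v - w ∈ M → -v - w ∈ M := by
    intro v h1 h2
    have := M.sub_mem h2 (hDM h1)
    convert this using 1
    module
  have all : ∀ (a b c : V), (2 : ℤ) • a ∈ D → (2 : ℤ) • b ∈ D →
      ⟪a, a⟫ = 2 → ⟪b, b⟫ = 2 → ⟪c, c⟫ = 2 → c - w ∈ M → a + b + c - w ∈ D →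
      ∀ p q r : ℤ, ⟪a, b⟫ = p → ⟪b, c⟫ = q → ⟪a, c⟫ = r →
      ∀ s t : ℤ, (s = 1 ∨ s = -1) → (t = 1 ∨ t = -1) →
      ¬ (s * t * p + t * q + s * r = -2 ∨ s * t * p + t * q + s * r = -3 ∨
        (s * t * p + t * q + s * r = -1 ∧ t * q + s * r = 0)) := by
    intro a b c ha2 hb2 ha hb hc hcM hs p q r hp hq hr s t hs1 ht1 hcon
    refine aux_excl M D hev hmin hDM hD w hw hw2 (s • a) (t • b) c ?_ ?_ hc hcM ?_
      (s * t * p) (t * q) (s * r) ?_ ?_ ?_ hcon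
    · rcases hs1 with rfl | rfl <;> simpa using ha
    · rcases ht1 with rfl | rfl <;> simpa using hb
    · rcases hs1 with rfl | rfl <;> rcases ht1 with rfl | rfl
      · simpa using hs
      · convert D.sub_mem hs hb2 using 1
        module
      · convert D.sub_mem hs ha2 using 1
        module
      · convert D.sub_mem (D.sub_mem hs ha2) hb2 using 1
        module
    · rcases hs1 with rfl | rfl <;> rcases ht1 with rfl | rfl <;> simp [hp]
    · rcases ht1 with rfl | rfl <;> simp [hq]
    · rcases hs1 with rfl | rfl <;> simp [hr]
  have A := all a b c ha2 hb2 ha hb hc hcM hs p q r hp hq hr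
  have B := all b c a hb2 hc2 hb hc ha haM (by convert hs using 1; module) q r p hq hr' hp'
  have C := all c a b hc2 ha2 hc ha hb hbM (by convert hs using 1; module) r p q hr' hp hq'
  have A1 := A 1 1 (by simp) (by simp)
  have A2 := A 1 (-1) (by simp) (by simp)
  have A3 := A (-1) 1 (by simp) (by simp)
  have A4 := A (-1) (-1) (by simp) (by simp)
  have B1 := B 1 1 (by simp) (by simp)
  have B2 := B 1 (-1) (by simp) (by simp)
  have B3 := B (-1) 1 (by simp) (by simp)
  have B4 := B (-1) (-1) (by simp) (by simp)
  have C1 := C 1 1 (by simp) (by simp)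
  have C2 := C 1 (-1) (by simp) (by simp)
  have C3 := C (-1) 1 (by simp) (by simp)
  have C4 := C (-1) (-1) (by simp) (by simp)
  clear A B C all
  omega

/-- Two of the three vectors have inner product in `{-1,0,1}`. -/
theorem aux_two (Υ M D : Submodule ℤ V) (hint : IsIntegralLat M)
    (hΥ : ∀ v ∈ Υ, v ≠ 0 → 4 ≤ 2 * ⟪v, v⟫) (hD : ∀ d ∈ D, d = 0 ∨ 8 ≤ ⟪d, d⟫)
    (w : V) (hw : ⟪w, w⟫ = 4) (a b c : V)
    (haΥ : a ∈ Υ) (hbΥ : b ∈ Υ) (hb2 : (2 : ℤ) • b ∈ D)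
    (ha : ⟪a, a⟫ = 2) (hb : ⟪b, b⟫ = 2) (hc : ⟪c, c⟫ = 2)
    (haM : a - w ∈ M) (hbM : b - w ∈ M) (hs : a + b + c - w ∈ D) (k l m : ℤ)
    (hk : ⟪a, w⟫ = k) (hl : ⟪b, w⟫ = l) (hm : ⟪c, w⟫ = m) (hm0 : 0 ≤ m) :
    ∃ n : ℤ, ⟪a, b⟫ = n ∧ -1 ≤ n ∧ n ≤ 1 := by
  obtain ⟨n, hn⟩ := hint _ haM _ hbM
  have e : ⟪a, b⟫ = ((n + k + l - 4 : ℤ) : ℝ) := by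
    rw [inner_sub_left, inner_sub_right, inner_sub_right, hw, hk, real_inner_comm b w, hl] at hn
    push_cast
    linarith
  have hcw : ¬ (c - w ∈ D) := by
    intro hcD
    have hm0' : (0 : ℝ) ≤ m := by exact_mod_cast hm0
    rcases hD _ hcD with h | h
    · rw [sub_eq_zero] at h
      rw [h] at hc; linarith
    · rw [real_inner_sub_sub_self] at h
      linarith
  have n1 : a - b ≠ 0 := by
    intro h
    rw [sub_eq_zero] at h
    apply hcw
    convert D.sub_mem hs hb2 using 1
    rw [h]; module
  have n2 : a + b ≠ 0 := by
    intro h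
    apply hcw
    rwa [h, zero_add] at hs
  have m1 := hΥ _ (Υ.sub_mem haΥ hbΥ) n1
  have m2 := hΥ _ (Υ.add_mem haΥ hbΥ) n2
  rw [real_inner_sub_sub_self] at m1
  rw [real_inner_add_add_self] at m2
  refine ⟨_, e, ?_, ?_⟩
  · have : (-1 : ℝ) ≤ ((n + k + l - 4 : ℤ) : ℝ) := by rw [← e]; linarith
    exact_mod_cast this
  · have : ((n + k + l - 4 : ℤ) : ℝ) ≤ (1 : ℝ) := by rw [← e]; linarith
    exact_mod_cast this

/-- Sign normalisation. -/
theorem aux_sign (M D : Submodule ℤ V) (hev : IsEvenLat M) (hmin : minNorm M = 4)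
    (hDM : D ≤ M) (w x : V) (hw : ⟪w, w⟫ = 4) (hw2 : (2 : ℤ) • w ∈ D) (hx : x ∈ M)
    (hx2 : (2 : ℤ) • x ∈ D) (h : ⟪w + x, w + x⟫ = 2) :
    ∃ x' ∈ M, x' - x ∈ D ∧ ⟪w + x', w + x'⟫ = 2 ∧ ∃ k : ℤ, ⟪w + x', w⟫ = k ∧ (k = 0 ∨ k = 1) ∧
      ⟪x', x'⟫ = 6 - 2 * k := by
  obtain ⟨n, hn, h1, h2⟩ := aux_pair M hev hmin (w + x) w h hw (by simpa using hx) (by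
    convert M.add_mem hx (hDM hw2) using 1
    module)
  have en : ∀ a : V, ⟪w + a, w + a⟫ = 2 → ⟪a, a⟫ = 6 - 2 * ⟪w + a, w⟫ := by
    intro a ha
    rw [real_inner_add_add_self] at ha
    rw [inner_add_left, real_inner_comm w a]
    linarith
  by_cases hn0 : 0 ≤ n
  · refine ⟨x, hx, by simp, h, n, hn, by omega, ?_⟩
    rw [en x h, hn]
  · have e : w + (-x - (2 : ℤ) • w) = -(w + x) := by module
    have e1 : ⟪w + (-x - (2 : ℤ) • w), w + (-x - (2 : ℤ) • w)⟫ = 2 := by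
      rw [e, inner_neg_neg, h]
    have e2 : ⟪w + (-x - (2 : ℤ) • w), w⟫ = ((-n : ℤ) : ℝ) := by
      rw [e, inner_neg_left, hn]; simp
    refine ⟨-x - (2 : ℤ) • w, M.sub_mem (M.neg_mem hx) (hDM hw2), ?_, e1, -n, e2, by omega, ?_⟩
    · convert D.neg_mem (D.add_mem hx2 hw2) using 1
      module
    · rw [en _ e1, e2]

/-- if there is an offender with `⟪w,w⟫ = 4`, then there is a super
offender. -/
theorem statement15 (Υ M N : Submodule ℤ V) (h : LeechSetup Υ M N)
    (w x y z : V) (hoff : Offender M N w x y z) (hw : ⟪w, w⟫ = 4) :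
    ∃ w' x' y' z' : V, SuperOffender M N w' x' y' z' := by
  obtain ⟨-, -, hsq, hΥ, ⟨hMΥ, hNΥ, -, -, -, hMN⟩, -, hev, -, hmin, -⟩ := h
  obtain ⟨⟨hwN, hx, hy, hz, hsum⟩, hax, hay, haz⟩ := hoff
  obtain ⟨D, hDdef⟩ : ∃ D, D = M ⊓ N := ⟨_, rfl⟩
  have hDM : D ≤ M := hDdef ▸ inf_le_left
  have two : ∀ v ∈ Υ, (2 : ℤ) • v ∈ D := by
    intro v hv
    rw [hDdef, hMN]
    exact Submodule.smul_mem_pointwise_smul v 2 Υ hv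
  have hD4 : ∀ d ∈ D, ∃ u ∈ Υ, d = (2 : ℤ) • u ∧ ⟪d, d⟫ = 4 * ⟪u, u⟫ := by
    intro d hd
    rw [hDdef, hMN, Submodule.mem_smul_pointwise_iff_exists] at hd
    obtain ⟨u, hu, rfl⟩ := hd
    refine ⟨u, hu, rfl, ?_⟩
    have : (2 : ℤ) • u = u + u := two_zsmul u
    rw [this, real_inner_add_add_self]; ring
  have hD : ∀ d ∈ D, d = 0 ∨ 8 ≤ ⟪d, d⟫ := by
    intro d hd
    obtain ⟨u, hu, e, e'⟩ := hD4 d hd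
    by_cases h0 : u = 0
    · left; rw [e, h0, smul_zero]
    · right
      have := hΥ u hu h0
      linarith
  have hDi : ∀ d ∈ D, ∃ n : ℤ, ⟪d, d⟫ = 4 * (n : ℝ) := by
    intro d hd
    obtain ⟨u, hu, -, e'⟩ := hD4 d hd
    obtain ⟨n, hn⟩ := hsq.1 u hu
    exact ⟨n, by rw [e', hn]⟩
  have hwΥ := hNΥ hwN
  have hw2 := two w hwΥ
  rw [← hDdef] at hsum
  obtain ⟨x', hx', hxx, hax', k, hk, hk01, hkx⟩ :=
    aux_sign M D hev hmin hDM w x hw hw2 hx (two x (hMΥ hx)) hax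
  obtain ⟨y', hy', hyy, hay', l, hl, hl01, hly⟩ :=
    aux_sign M D hev hmin hDM w y hw hw2 hy (two y (hMΥ hy)) hay
  obtain ⟨z', hz', hzz, haz', m, hm, hm01, hmz⟩ :=
    aux_sign M D hev hmin hDM w z hw hw2 hz (two z (hMΥ hz)) haz
  have hsum' : x' + y' + z' ∈ D := by
    convert D.add_mem hsum (D.add_mem (D.add_mem hxx hyy) hzz) using 1
    module
  have hs : (w + x') + (w + y') + (w + z') - w ∈ D := by
    convert D.add_mem hsum' hw2 using 1
    module
  refine ⟨w, x', y', z', ⟨⟨hwN, hx', hy', hz', hDdef ▸ hsum'⟩, hax', hay', haz'⟩, hw, ?_⟩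
  have haΥ := Υ.add_mem hwΥ (hMΥ hx')
  have hbΥ := Υ.add_mem hwΥ (hMΥ hy')
  have hcΥ := Υ.add_mem hwΥ (hMΥ hz')
  have haM : w + x' - w ∈ M := by simpa using hx'
  have hbM : w + y' - w ∈ M := by simpa using hy'
  have hcM : w + z' - w ∈ M := by simpa using hz'
  generalize w + x' = a at *
  generalize w + y' = b at *
  generalize w + z' = c at *
  obtain ⟨p, hp, hp1⟩ := aux_two Υ M D hev.1 hΥ hD w hw a b c haΥ hbΥ (two b hbΥ) hax' hay' haz'
    haM hbM hs k l m hk hl hm (by omega)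
  obtain ⟨q, hq, hq1⟩ := aux_two Υ M D hev.1 hΥ hD w hw b c a hbΥ hcΥ (two c hcΥ) hay' haz' hax'
    hbM hcM (by convert hs using 1; module) l m k hl hm hk (by omega)
  obtain ⟨r, hr, hr1⟩ := aux_two Υ M D hev.1 hΥ hD w hw a c b haΥ hcΥ (two c hcΥ) hax' haz' hay'
    haM hcM (by convert hs using 1; module) k m l hk hm hl (by omega)
  obtain ⟨rfl, rfl, rfl⟩ := aux_orth M D hev hmin hDM hD w hw hw2 a b c (two a haΥ) (two b hbΥ)
    (two c hcΥ) hax' hay' haz' haM hbM hcM hs p q r hp hq hr hp1 hq1 hr1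
  have en : ⟪a + b + c - w, a + b + c - w⟫ = ((10 - 2 * (k + l + m) : ℤ) : ℝ) := by
    rw [real_inner_sub_sub_self, aux_norm3, hax', hay', haz', hp, hq, hr, inner_add_left,
      inner_add_left, hk, hl, hm, hw]
    push_cast; ring
  obtain ⟨n, hn⟩ := hDi _ hs
  have h1 : 10 - 2 * (k + l + m) = 4 * n := by
    rw [en] at hn; exact_mod_cast hn
  have h3 : k + l + m ≠ 3 := by
    intro h3
    rw [h3] at en
    rcases hD _ hs with h | h
    · rw [h] at en; norm_num at en
    · rw [en] at h; norm_num at h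
  have hcases : (k = 1 ∧ l = 0 ∧ m = 0) ∨ (k = 0 ∧ l = 1 ∧ m = 0) ∨ (k = 0 ∧ l = 0 ∧ m = 1) := by
    omega
  rw [hkx, hly, hmz]
  have p1 : ({4, 6, 6} : Multiset ℝ) = {6, 6, 4} := by
    simp only [Multiset.insert_eq_cons, ← Multiset.cons_zero]
    rw [Multiset.cons_swap 4 6, Multiset.cons_swap 4 6]
  have p2 : ({6, 4, 6} : Multiset ℝ) = {6, 6, 4} := by
    simp only [Multiset.insert_eq_cons, ← Multiset.cons_zero]
    rw [Multiset.cons_swap 4 6]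
  rcases hcases with ⟨rfl, rfl, rfl⟩ | ⟨rfl, rfl, rfl⟩ | ⟨rfl, rfl, rfl⟩
  · convert p1 using 2 <;> norm_num
  · convert p2 using 2 <;> norm_num
  · norm_num
end
end
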